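/- Let α₁₀, α₂₀ : ℝ² → ℂ be Schwartz functions, and let (α₁, α₂) be a pair of smooth functions ℝ² × [0,∞) → ℂ satisfying the Dirac system with varying mass, with α₁(·, 0) = α₁₀, α₂(·, 0) = α₂₀, and such that X ↦ αⱼ(X,T) is a Schwartz function for every T ≥ 0 (j = 1, 2). Then for every ρ > 0, every M, l ∈ ℕ, and every multi-index n ∈ ℕ², there exists a constant C > 0 such that sup over T ∈ [0,ρ] and X ∈ ℝ² of (1 + |X|²)^{M/2}·|∂_X^n ∂_T^l αⱼ(X, T)| is at most C, for j = 1, 2. -/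

import Mathlib

/-!
The Dirac system is symmetric hyperbolic, and the theorem is the propagation of weighted Sobolev
regularity for it.

Multiplied by `-i`, the system reads `∂_T α₁ = c (∂_{X₁} + i ∂_{X₂}) α₂ + q α₁`,
`∂_T α₂ = c (∂_{X₁} - i ∂_{X₂}) α₁ - q α₂`, with `c = v_F / (2√E_D)` and `q` purely imaginary
(`Sys`).  The energy density `|α₁|² + |α₂|²` then satisfies a local conservation
law whose flux is at most `c` times the density (`local_energy`), also in the presence of source
terms.  Integrate it against the weight `(1 + |X|²)^M` times a cut-off whose support shrinks at speed `2c`: the decrease of the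
cut-off absorbs the flux through its edge, the gradient of the weight is controlled by the weight,
and Gronwall's inequality bounds the cut-off energy uniformly in the cut-off radius
(`energy_pointwise`, `energy_estimate`).  Monotone convergence gives weighted `L²` bounds on
`[0, ρ]`.  The compact support of the cut-off makes differentiation under the integral and
integration by parts elementary.

Spatial derivatives of a solution solve the same system with sources made of derivatives of `q`
times lower-order derivatives of the solution, so induction on the order gives weighted Sobolev
bounds of every order (`sobolev_estimate`); time derivatives follow because the coefficients do not
depend on time (`time_derivatives`).  A Sobolev inequality on unit squares turns these into weighted
sup bounds (`sup_bound`).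

Derivatives are taken within the closed half-space `T ≥ 0`, where the solution is smooth.  The
two-sided derivatives in the statement agree with these for `T > 0`; at `T = 0` they may take the
junk value `0`, and each derivative in the statement is either `0` or the one-sided value
(`iteratedDeriv_alternative`, `iterate_pd_alternative`), so the bounds still apply.
-/

noncomputable section

/-- Points of the plane. -/
abbrev Vec : Type := Fin 2 → ℝ

/-- The partial derivative ∂ᵢ of a ℂ-valued function on ℝ². -/
def pd (i : Fin 2) (f : Vec → ℂ) : Vec → ℂ := fun x => fderiv ℝ f x (Pi.single i 1)

/-- The iterated spatial partial derivative ∂_X^n = ∂₁^{n₁}∂₂^{n₂} of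
multi-order n = (n₁, n₂). -/
def pdMulti (n₁ n₂ : ℕ) (f : Vec → ℂ) : Vec → ℂ := (pd 0)^[n₁] ((pd 1)^[n₂] f)

/-- The Dirac system with varying mass, at every point of ℝ² × [0,∞). -/
def DiracSystem (ED vF ϑ : ℝ) (κ : Vec → ℝ) (α₁ α₂ : Vec → ℝ → ℂ) : Prop :=
  ∀ X : Vec, ∀ T : ℝ, 0 ≤ T →
    (Complex.I * deriv (α₁ X) T
        - ((vF / (2 * Real.sqrt ED) : ℝ) : ℂ) *
            (Complex.I * pd 0 (fun Y => α₂ Y T) X - pd 1 (fun Y => α₂ Y T) X)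
        + (((ϑ * κ X) / (2 * Real.sqrt ED) : ℝ) : ℂ) * α₁ X T = 0)
    ∧
    (Complex.I * deriv (α₂ X) T
        - ((vF / (2 * Real.sqrt ED) : ℝ) : ℂ) *
            (Complex.I * pd 0 (fun Y => α₁ Y T) X + pd 1 (fun Y => α₁ Y T) X)
        - (((ϑ * κ X) / (2 * Real.sqrt ED) : ℝ) : ℂ) * α₂ X T = 0)

/-! ### Differentiation on the closed half-space -/

/-- The closed half-space `ℝ² × [0,∞)`. -/
def HS : Set (Vec × ℝ) := Set.univ ×ˢ Set.Ici 0

/-- Smoothness up to the boundary on the closed half-space. -/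
def Sm (f : Vec × ℝ → ℂ) : Prop := ContDiffOn ℝ (⊤ : ℕ∞) f HS

/-- The derivative in direction `v`, taken within the half-space, so that at `T = 0` the time
derivative is one-sided. -/
def D (v : Vec × ℝ) (f : Vec × ℝ → ℂ) : Vec × ℝ → ℂ := fun p => fderivWithin ℝ f HS p v

/-- The spatial coordinate directions of space-time. -/
def ex (i : Fin 2) : Vec × ℝ := (Pi.single i 1, 0)

/-- The time direction of space-time. -/
def et : Vec × ℝ := (0, 1)

lemma mem_HS {X : Vec} {T : ℝ} : (X, T) ∈ HS ↔ 0 ≤ T := by simp [HS]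

lemma mem_HS' {p : Vec × ℝ} : p ∈ HS ↔ 0 ≤ p.2 := by simp [HS]

lemma uniqueDiffOn_HS : UniqueDiffOn ℝ HS := uniqueDiffOn_univ.prod (uniqueDiffOn_Ici 0)

lemma interior_HS : interior HS = Set.univ ×ˢ Set.Ioi 0 := by
  simp [HS, interior_prod_eq]

lemma HS_subset_closure : HS ⊆ closure (interior HS) := by
  rw [interior_HS, closure_prod_eq]
  simp [HS]

lemma HS_mem_nhds {p : Vec × ℝ} (hp : 0 < p.2) : HS ∈ nhds p := by
  rw [mem_nhds_iff]
  exact ⟨interior HS, interior_subset, isOpen_interior, by simp [interior_HS, hp]⟩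

lemma Sm.differentiableWithinAt {f : Vec × ℝ → ℂ} (hf : Sm f) {p : Vec × ℝ} (hp : p ∈ HS) :
    DifferentiableWithinAt ℝ f HS p :=
  (hf.differentiableOn (by simp)) p hp

lemma Sm.hasFDerivAt {f : Vec × ℝ → ℂ} (hf : Sm f) {p : Vec × ℝ} (hp : 0 < p.2) :
    HasFDerivAt f (fderivWithin ℝ f HS p) p :=
  ((hf.differentiableWithinAt (mem_HS'.2 hp.le)).hasFDerivWithinAt).hasFDerivAt (HS_mem_nhds hp)

lemma Sm.D {f : Vec × ℝ → ℂ} (hf : Sm f) (v : Vec × ℝ) : Sm (D v f) := by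
  have h := ContDiffOn.fderivWithin (m := ((⊤ : ℕ∞) : WithTop ℕ∞)) hf uniqueDiffOn_HS (by simp)
  exact h.clm_apply contDiffOn_const

lemma Sm.add {f g : Vec × ℝ → ℂ} (hf : Sm f) (hg : Sm g) : Sm (fun p => f p + g p) :=
  ContDiffOn.add hf hg

lemma Sm.mul {f g : Vec × ℝ → ℂ} (hf : Sm f) (hg : Sm g) : Sm (fun p => f p * g p) :=
  ContDiffOn.mul hf hg

lemma Sm.const (c : ℂ) : Sm (fun _ => c) := contDiffOn_const

lemma Sm.congr {f g : Vec × ℝ → ℂ} (hf : Sm f) (h : Set.EqOn g f HS) : Sm g :=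
  ContDiffOn.congr hf h

lemma D_congr {f g : Vec × ℝ → ℂ} (h : Set.EqOn f g HS) (v : Vec × ℝ) :
    Set.EqOn (D v f) (D v g) HS := fun p hp => by
  simp only [D]
  rw [fderivWithin_congr h (h hp)]

lemma D_add {f g : Vec × ℝ → ℂ} (hf : Sm f) (hg : Sm g) (v : Vec × ℝ) {p : Vec × ℝ}
    (hp : p ∈ HS) : D v (fun p => f p + g p) p = D v f p + D v g p := by
  simp only [D]
  rw [fderivWithin_fun_add (uniqueDiffOn_HS p hp) (hf.differentiableWithinAt hp)
    (hg.differentiableWithinAt hp)]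
  rfl

lemma D_mul {f g : Vec × ℝ → ℂ} (hf : Sm f) (hg : Sm g) (v : Vec × ℝ) {p : Vec × ℝ}
    (hp : p ∈ HS) : D v (fun p => f p * g p) p = D v f p * g p + f p * D v g p := by
  simp only [D]
  rw [fderivWithin_fun_mul (uniqueDiffOn_HS p hp) (hf.differentiableWithinAt hp)
    (hg.differentiableWithinAt hp)]
  simp
  ring

lemma D_const (c : ℂ) (v p : Vec × ℝ) : D v (fun _ => c) p = 0 := by
  simp [D]

lemma D_const_mul {f : Vec × ℝ → ℂ} (c : ℂ) (hf : Sm f) (v : Vec × ℝ) {p : Vec × ℝ}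
    (hp : p ∈ HS) : D v (fun p => c * f p) p = c * D v f p := by
  rw [D_mul (Sm.const c) hf v hp, D_const]
  ring

lemma D_comm {f : Vec × ℝ → ℂ} (hf : Sm f) (v w : Vec × ℝ) :
    Set.EqOn (D v (D w f)) (D w (D v f)) HS := fun p hp => by
  have hsymm : IsSymmSndFDerivWithinAt ℝ f HS p :=
    (hf p hp).isSymmSndFDerivWithinAt (by
      rw [minSmoothness_of_isRCLikeNormedField]
      exact WithTop.coe_le_coe.2 (le_top : (2 : ℕ∞) ≤ ⊤))
      uniqueDiffOn_HS (HS_subset_closure hp) hp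
  have h := ContDiffOn.fderivWithin (m := ((⊤ : ℕ∞) : WithTop ℕ∞)) hf uniqueDiffOn_HS (by simp)
  have hd : DifferentiableWithinAt ℝ (fderivWithin ℝ f HS) HS p :=
    (h.differentiableOn (by simp)) p hp
  have key : ∀ v w : Vec × ℝ,
      D v (D w f) p = fderivWithin ℝ (fderivWithin ℝ f HS) HS p v w := by
    intro v w
    change fderivWithin ℝ (fun y => fderivWithin ℝ f HS y w) HS p v = _
    rw [fderivWithin_clm_apply (uniqueDiffOn_HS p hp) hd (differentiableWithinAt_const w)]
    simp
  rw [key, key, hsymm]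

/-- Spatial derivatives within the half-space are derivatives of time slices. -/
lemma hasFDerivAt_slice {f : Vec × ℝ → ℂ} (hf : Sm f) {X : Vec} {T : ℝ} (hT : 0 ≤ T) :
    HasFDerivAt (fun Y : Vec => f (Y, T))
      ((fderivWithin ℝ f HS (X, T)).comp (ContinuousLinearMap.inl ℝ Vec ℝ)) X := by
  have h := (hf.differentiableWithinAt (mem_HS.2 hT : (X, T) ∈ HS)).hasFDerivWithinAt
  have h2 : HasFDerivAt (fun Y : Vec => (Y, T)) (ContinuousLinearMap.inl ℝ Vec ℝ) X :=
    hasFDerivAt_prodMk_left X T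
  rw [← hasFDerivWithinAt_univ] at h2 ⊢
  exact h.comp X h2 (fun Y _ => mem_HS.2 hT)

lemma pd_slice {f : Vec × ℝ → ℂ} (hf : Sm f) (i : Fin 2) {X : Vec} {T : ℝ} (hT : 0 ≤ T) :
    pd i (fun Y : Vec => f (Y, T)) X = D (ex i) f (X, T) := by
  simp only [pd, D, ex]
  rw [(hasFDerivAt_slice hf hT).fderiv]
  simp

/-- The time derivative within the half-space, as a one-sided derivative. -/
lemma hasDerivWithinAt_time {f : Vec × ℝ → ℂ} (hf : Sm f) {X : Vec} {T : ℝ} (hT : 0 ≤ T) :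
    HasDerivWithinAt (fun t => f (X, t)) (D et f (X, T)) (Set.Ici 0) T := by
  have h := (hf.differentiableWithinAt (mem_HS.2 hT : (X, T) ∈ HS)).hasFDerivWithinAt
  have h2 : HasDerivWithinAt (fun t : ℝ => (X, t)) et (Set.Ici 0) T :=
    ((hasDerivAt_const T X).prodMk (hasDerivAt_id T)).hasDerivWithinAt
  exact h.comp_hasDerivWithinAt T h2 (fun t ht => mem_HS.2 ht)

lemma hasDerivAt_time {f : Vec × ℝ → ℂ} (hf : Sm f) {X : Vec} {T : ℝ} (hT : 0 < T) :
    HasDerivAt (fun t => f (X, t)) (D et f (X, T)) T :=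
  (hasDerivWithinAt_time hf hT.le).hasDerivAt (Ici_mem_nhds hT)

/-! ### Junk values of the two-sided time derivatives at the initial time -/

/-- If `g` takes at each point the value `0` or that of a differentiable function `h`, then so do
the partial derivatives of `g` relative to those of `h`, whatever the set where `g = 0`. -/
lemma pd_alternative {g h : Vec → ℂ} (hgh : ∀ x, g x = 0 ∨ g x = h x) (hh : Differentiable ℝ h)
    (i : Fin 2) (x : Vec) : pd i g x = 0 ∨ pd i g x = pd i h x := by
  by_cases hg : DifferentiableAt ℝ g x
  swap
  · left
    simp [pd, fderiv_zero_of_not_differentiableAt hg]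
  set v : Vec := Pi.single i 1 with hv
  have hline : ∀ k : Vec → ℂ, DifferentiableAt ℝ k x →
      HasDerivAt (fun t : ℝ => k (x + t • v)) (fderiv ℝ k x v) 0 := fun k hk =>
    hk.hasFDerivAt.hasLineDerivAt v
  have hgl := hline g hg
  have hhl := hline h (hh x)
  by_cases hfr : ∃ᶠ t in nhdsWithin (0 : ℝ) {0}ᶜ, g (x + t • v) = 0
  · left
    have h0 : g x = 0 := by
      have hc : Filter.Tendsto (fun t : ℝ => g (x + t • v)) (nhdsWithin 0 {0}ᶜ) (nhds (g x)) := by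
        have := hgl.continuousAt.tendsto.mono_left (nhdsWithin_le_nhds (s := {0}ᶜ))
        simpa using this
      by_contra hne
      exact hfr (hc.eventually_ne hne)
    have hs := hasDerivAt_iff_tendsto_slope.1 hgl
    by_contra hne
    refine hfr ((hs.eventually_ne hne).mono fun t ht h => ht ?_)
    simp [slope, h, h0]
  · right
    rw [Filter.not_frequently] at hfr
    have hev : (fun t : ℝ => g (x + t • v)) =ᶠ[nhdsWithin 0 {0}ᶜ] fun t => h (x + t • v) :=
      hfr.mono fun t ht => (hgh _).resolve_left ht
    have h0 : g (x + (0 : ℝ) • v) = h (x + (0 : ℝ) • v) := by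
      have h1 : Filter.Tendsto (fun t : ℝ => g (x + t • v)) (nhdsWithin 0 {0}ᶜ)
          (nhds (g (x + (0 : ℝ) • v))) := hgl.continuousAt.tendsto.mono_left nhdsWithin_le_nhds
      have h2 : Filter.Tendsto (fun t : ℝ => h (x + t • v)) (nhdsWithin 0 {0}ᶜ)
          (nhds (h (x + (0 : ℝ) • v))) := hhl.continuousAt.tendsto.mono_left nhdsWithin_le_nhds
      exact tendsto_nhds_unique h1 (h2.congr' hev.symm)
    have hev' : (fun t : ℝ => g (x + t • v)) =ᶠ[nhds 0] fun t => h (x + t • v) :=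
      eventuallyEq_nhds_of_eventuallyEq_nhdsNE hev h0
    exact (hgl.unique (hhl.congr_of_eventuallyEq hev'))

lemma Sm.iterate_D {f : Vec × ℝ → ℂ} (hf : Sm f) (v : Vec × ℝ) (n : ℕ) :
    Sm ((_root_.D v)^[n] f) := by
  induction n with
  | zero => exact hf
  | succ n ih =>
    rw [Function.iterate_succ_apply']
    exact ih.D v

lemma iterate_pd_alternative {g : Vec → ℂ} {f : Vec × ℝ → ℂ} (hf : Sm f) {T : ℝ} (hT : 0 ≤ T)
    (hg : ∀ x, g x = 0 ∨ g x = f (x, T)) (i : Fin 2) (n : ℕ) (x : Vec) :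
    (pd i)^[n] g x = 0 ∨ (pd i)^[n] g x = (D (ex i))^[n] f (x, T) := by
  induction n generalizing x with
  | zero => exact hg x
  | succ n ih =>
    rw [Function.iterate_succ_apply', Function.iterate_succ_apply']
    have hs := hf.iterate_D (ex i) n
    rw [← pd_slice hs i hT]
    exact pd_alternative ih (fun y => (hasFDerivAt_slice hs hT).differentiableAt) i x

lemma iteratedDeriv_eq {α : Vec → ℝ → ℂ} (hα : Sm (fun p => α p.1 p.2)) (l : ℕ) (X : Vec)
    {T : ℝ} (hT : 0 < T) : iteratedDeriv l (α X) T = (D et)^[l] (fun p => α p.1 p.2) (X, T) := by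
  induction l generalizing T with
  | zero => simp
  | succ l ih =>
    rw [Function.iterate_succ_apply', iteratedDeriv_succ]
    have h := hasDerivAt_time (hα.iterate_D et l) (X := X) hT
    refine (h.congr_of_eventuallyEq ?_).deriv
    filter_upwards [Ioi_mem_nhds hT] with t ht using ih ht

/-- The two-sided iterated time derivative at `T = 0` involves values at negative times.  It is
either the one-sided derivative or the junk value `0`. -/
lemma iteratedDeriv_alternative {α : Vec → ℝ → ℂ} (hα : Sm (fun p => α p.1 p.2)) (l : ℕ)
    (X : Vec) {T : ℝ} (hT : 0 ≤ T) :
    iteratedDeriv l (α X) T = 0 ∨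
      iteratedDeriv l (α X) T = (D et)^[l] (fun p => α p.1 p.2) (X, T) := by
  rcases hT.lt_or_eq with hT | rfl
  · exact Or.inr (iteratedDeriv_eq hα l X hT)
  cases l with
  | zero => right; simp
  | succ l =>
    rw [Function.iterate_succ_apply', iteratedDeriv_succ]
    by_cases hd : DifferentiableAt ℝ (iteratedDeriv l (α X)) 0
    swap
    · exact Or.inl (deriv_zero_of_not_differentiableAt hd)
    right
    set k : ℝ → ℂ := fun t => (D et)^[l] (fun p => α p.1 p.2) (X, t) with hk
    have h := hasDerivWithinAt_time (hα.iterate_D et l) (X := X) le_rfl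
    have hev : iteratedDeriv l (α X) =ᶠ[nhdsWithin 0 (Set.Ioi 0)] k := by
      filter_upwards [self_mem_nhdsWithin] with t ht using iteratedDeriv_eq hα l X ht
    have hkc : Filter.Tendsto k (nhdsWithin 0 (Set.Ioi 0)) (nhds (k 0)) :=
      h.continuousWithinAt.tendsto.mono_left (nhdsWithin_mono _ Set.Ioi_subset_Ici_self)
    have h0 : iteratedDeriv l (α X) 0 = k 0 :=
      tendsto_nhds_unique (hd.continuousAt.tendsto.mono_left nhdsWithin_le_nhds)
        (hkc.congr' hev.symm)
    have h1 : HasDerivWithinAt k (deriv (iteratedDeriv l (α X)) 0) (Set.Ioi 0) 0 :=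
      hd.hasDerivAt.hasDerivWithinAt.congr_of_eventuallyEq hev.symm h0.symm
    exact (uniqueDiffWithinAt_Ioi 0).eq_deriv _ h1 (h.mono Set.Ioi_subset_Ici_self)

/-! ### Weighted Sobolev bounds, uniform in time -/

open MeasureTheory

/-- The polynomial weight `1 + |X|²`, with the Euclidean norm of `X`. -/
def wt (X : Vec) : ℝ := 1 + (X 0 ^ 2 + X 1 ^ 2)

lemma one_le_wt (X : Vec) : 1 ≤ wt X := by
  unfold wt
  nlinarith [sq_nonneg (X 0), sq_nonneg (X 1)]

lemma wt_pos (X : Vec) : 0 < wt X := lt_of_lt_of_le one_pos (one_le_wt X)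

lemma contDiff_wt : ContDiff ℝ (⊤ : ℕ∞) wt := by
  unfold wt
  fun_prop

lemma continuous_wt : Continuous wt := contDiff_wt.continuous

/-- All polynomially weighted `L²` norms of the time slices of `f` are bounded uniformly for
`T ∈ [0,ρ]`.  The lower integral makes finiteness part of the assertion. -/
def L2Bd (ρ : ℝ) (f : Vec × ℝ → ℂ) : Prop :=
  ∀ M : ℕ, ∃ C : ℝ, ∀ T ∈ Set.Icc (0 : ℝ) ρ,
    ∫⁻ X : Vec, ENNReal.ofReal (wt X ^ M * ‖f (X, T)‖ ^ 2) ≤ ENNReal.ofReal C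

/-- `L2Bd` for all iterated spatial derivatives of order at most `N`. -/
def SobBd (ρ : ℝ) : ℕ → (Vec × ℝ → ℂ) → Prop
  | 0, f => L2Bd ρ f
  | N + 1, f => L2Bd ρ f ∧ ∀ i, SobBd ρ N (D (ex i) f)

/-- Smooth functions on the plane that are bounded together with all their derivatives. -/
def BddSmooth (g : Vec → ℂ) : Prop :=
  ContDiff ℝ (⊤ : ℕ∞) g ∧ ∀ k : ℕ, ∃ C : ℝ, ∀ x, ‖iteratedFDeriv ℝ k g x‖ ≤ C

lemma BddSmooth.pd {g : Vec → ℂ} (hg : BddSmooth g) (i : Fin 2) : BddSmooth (pd i g) := by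
  obtain ⟨h1, h2⟩ := hg
  have h3 : ContDiff ℝ (⊤ : ℕ∞) (fderiv ℝ g) := h1.fderiv_right (by simp)
  refine ⟨h3.clm_apply contDiff_const, fun k => ?_⟩
  obtain ⟨C, hC⟩ := h2 (k + 1)
  refine ⟨‖(Pi.single i 1 : Vec)‖ * C, fun x => ?_⟩
  have h4 := norm_iteratedFDeriv_clm_apply_const (c := (Pi.single i 1 : Vec)) (n := k)
    (h3.contDiffAt (x := x)) (by exact_mod_cast le_top)
  rw [norm_iteratedFDeriv_fderiv] at h4
  exact h4.trans (mul_le_mul_of_nonneg_left (hC x) (norm_nonneg _))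

lemma BddSmooth.bdd {g : Vec → ℂ} (hg : BddSmooth g) : ∃ B : ℝ, ∀ x, ‖g x‖ ≤ B := by
  obtain ⟨C, hC⟩ := hg.2 0
  exact ⟨C, fun x => by simpa using hC x⟩

lemma BddSmooth.const (c : ℂ) : BddSmooth (fun _ => c) := by
  refine ⟨contDiff_const, fun k => ⟨‖c‖, fun x => ?_⟩⟩
  cases k with
  | zero => simp
  | succ k => simp [iteratedFDeriv_succ_const]

lemma BddSmooth.of_real {κ : Vec → ℝ} (h1 : ContDiff ℝ (⊤ : ℕ∞) κ)
    (h2 : ∀ k : ℕ, ∃ C : ℝ, ∀ x : Vec, ‖iteratedFDeriv ℝ k κ x‖ ≤ C) (c : ℂ) :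
    BddSmooth (fun x => c * (κ x : ℂ)) := by
  let L : ℝ →L[ℝ] ℂ := c • Complex.ofRealCLM
  refine ⟨L.contDiff.comp h1, fun k => ?_⟩
  obtain ⟨C, hC⟩ := h2 k
  exact ⟨‖L‖ * C, fun x => (L.norm_iteratedFDeriv_comp_left (h1.contDiffAt (x := x))
    (by exact_mod_cast le_top)).trans (mul_le_mul_of_nonneg_left (hC x) (norm_nonneg _))⟩

lemma BddSmooth.sm {g : Vec → ℂ} (hg : BddSmooth g) : Sm (fun p => g p.1) :=
  (hg.1.comp contDiff_fst).contDiffOn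

lemma D_ex_fst {g : Vec → ℂ} (hg : BddSmooth g) (i : Fin 2) {p : Vec × ℝ} (hp : p ∈ HS) :
    D (ex i) (fun p => g p.1) p = pd i g p.1 :=
  (pd_slice hg.sm i (X := p.1) (mem_HS'.1 hp)).symm

lemma D_et_fst {g : Vec → ℂ} (hg : BddSmooth g) {p : Vec × ℝ} (hp : p ∈ HS) :
    D et (fun p => g p.1) p = 0 := by
  have h := hasDerivWithinAt_time hg.sm (X := p.1) (mem_HS'.1 hp)
  exact (uniqueDiffOn_Ici (0 : ℝ) p.2 (mem_HS'.1 hp)).eq_deriv _ h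
    (hasDerivWithinAt_const p.2 _ (g p.1))

lemma Sm.continuous_slice {f : Vec × ℝ → ℂ} (hf : Sm f) {T : ℝ} (hT : 0 ≤ T) :
    Continuous fun X => f (X, T) :=
  continuous_iff_continuousAt.2 fun _ => (hasFDerivAt_slice hf hT).continuousAt

lemma L2Bd.congr {ρ : ℝ} {f g : Vec × ℝ → ℂ} (hf : L2Bd ρ f) (h : Set.EqOn g f HS) :
    L2Bd ρ g := fun M => by
  obtain ⟨C, hC⟩ := hf M
  refine ⟨C, fun T hT => ?_⟩
  have : ∀ X, g (X, T) = f (X, T) := fun X => h (mem_HS.2 hT.1)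
  simpa only [this] using hC T hT

lemma L2Bd.mul {ρ : ℝ} {f : Vec × ℝ → ℂ} (hf : L2Bd ρ f) {g : Vec → ℂ} (hg : BddSmooth g) :
    L2Bd ρ (fun p => g p.1 * f p) := fun M => by
  obtain ⟨C, hC⟩ := hf M
  obtain ⟨B, hB⟩ := hg.bdd
  refine ⟨B ^ 2 * C, fun T hT => ?_⟩
  rw [ENNReal.ofReal_mul (sq_nonneg B)]
  refine le_trans ?_ (mul_le_mul_right (hC T hT) _)
  rw [← lintegral_const_mul' _ _ ENNReal.ofReal_ne_top]
  refine lintegral_mono fun X => ?_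
  rw [← ENNReal.ofReal_mul (sq_nonneg B)]
  refine ENNReal.ofReal_le_ofReal ?_
  have h1 : ‖g X‖ ^ 2 ≤ B ^ 2 := pow_le_pow_left₀ (norm_nonneg _) (hB X) 2
  have h2 : 0 ≤ wt X ^ M * ‖f (X, T)‖ ^ 2 := by have := wt_pos X; positivity
  rw [norm_mul, mul_pow]
  nlinarith

lemma L2Bd.add {ρ : ℝ} {f g : Vec × ℝ → ℂ} (hf : L2Bd ρ f) (hg : L2Bd ρ g) (hfs : Sm f) :
    L2Bd ρ (fun p => f p + g p) := fun M => by
  obtain ⟨C, hC⟩ := hf M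
  obtain ⟨C', hC'⟩ := hg M
  refine ⟨2 * max C 0 + 2 * max C' 0, fun T hT => ?_⟩
  have hmeas : Measurable fun X : Vec => ENNReal.ofReal (2 * (wt X ^ M * ‖f (X, T)‖ ^ 2)) := by
    have h1 := hfs.continuous_slice hT.1
    have h2 := continuous_wt
    exact ENNReal.measurable_ofReal.comp (Continuous.measurable
      (continuous_const.mul ((h2.pow M).mul (h1.norm.pow 2))))
  have h2 : ∀ (k : Vec × ℝ → ℂ) (K : ℝ),
      ∫⁻ X : Vec, ENNReal.ofReal (wt X ^ M * ‖k (X, T)‖ ^ 2) ≤ ENNReal.ofReal K →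
      ∫⁻ X : Vec, ENNReal.ofReal (2 * (wt X ^ M * ‖k (X, T)‖ ^ 2))
        ≤ ENNReal.ofReal (2 * max K 0) := by
    intro k K hk
    simp only [ENNReal.ofReal_mul (zero_le_two : (0 : ℝ) ≤ 2)]
    rw [lintegral_const_mul' _ _ ENNReal.ofReal_ne_top]
    exact mul_le_mul_right (hk.trans (ENNReal.ofReal_le_ofReal (le_max_left _ _))) _
  rw [ENNReal.ofReal_add (by positivity) (by positivity)]
  refine le_trans ?_ (add_le_add (h2 f C (hC T hT)) (h2 g C' (hC' T hT)))
  rw [← lintegral_add_left hmeas]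
  refine lintegral_mono fun X => ?_
  have hw : 0 < wt X ^ M := pow_pos (wt_pos X) M
  rw [← ENNReal.ofReal_add (by positivity) (by positivity)]
  refine ENNReal.ofReal_le_ofReal ?_
  have h3 : ‖f (X, T) + g (X, T)‖ ^ 2 ≤ 2 * ‖f (X, T)‖ ^ 2 + 2 * ‖g (X, T)‖ ^ 2 := by
    have h4 := norm_add_le (f (X, T)) (g (X, T))
    have h5 := pow_le_pow_left₀ (norm_nonneg _) h4 2
    nlinarith [sq_nonneg (‖f (X, T)‖ - ‖g (X, T)‖)]
  nlinarith

lemma SobBd.l2Bd {ρ : ℝ} {N : ℕ} {f : Vec × ℝ → ℂ} (hf : SobBd ρ N f) : L2Bd ρ f := by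
  cases N with
  | zero => exact hf
  | succ N => exact hf.1

lemma SobBd.pred {ρ : ℝ} {N : ℕ} {f : Vec × ℝ → ℂ} (hf : SobBd ρ (N + 1) f) : SobBd ρ N f := by
  induction N generalizing f with
  | zero => exact hf.1
  | succ N ih => exact ⟨hf.1, fun i => ih (hf.2 i)⟩

lemma SobBd.congr {ρ : ℝ} {N : ℕ} {f g : Vec × ℝ → ℂ} (hf : SobBd ρ N f)
    (h : Set.EqOn g f HS) : SobBd ρ N g := by
  induction N generalizing f g with
  | zero => exact L2Bd.congr hf h
  | succ N ih => exact ⟨hf.1.congr h, fun i => ih (hf.2 i) (D_congr h _)⟩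

lemma SobBd.add {ρ : ℝ} {N : ℕ} {f g : Vec × ℝ → ℂ} (hf : SobBd ρ N f) (hg : SobBd ρ N g)
    (hfs : Sm f) (hgs : Sm g) : SobBd ρ N (fun p => f p + g p) := by
  induction N generalizing f g with
  | zero => exact L2Bd.add hf hg hfs
  | succ N ih =>
    exact ⟨hf.1.add hg.1 hfs, fun i => (ih (hf.2 i) (hg.2 i) (hfs.D _) (hgs.D _)).congr
      fun p hp => D_add hfs hgs _ hp⟩

lemma SobBd.mul {ρ : ℝ} {N : ℕ} {f : Vec × ℝ → ℂ} (hf : SobBd ρ N f) (hfs : Sm f)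
    {g : Vec → ℂ} (hg : BddSmooth g) : SobBd ρ N (fun p => g p.1 * f p) := by
  induction N generalizing f g with
  | zero => exact L2Bd.mul hf hg
  | succ N ih =>
    refine ⟨hf.1.mul hg, fun i => ?_⟩
    refine ((ih hf.pred hfs (hg.pd i)).add (ih (hf.2 i) (hfs.D _) hg)
      ((hg.pd i).sm.mul hfs) (hg.sm.mul (hfs.D _))).congr fun p hp => ?_
    rw [D_mul hg.sm hfs _ hp, D_ex_fst hg i hp]

lemma SobBd.zero (ρ : ℝ) (N : ℕ) : SobBd ρ N (fun _ => 0) := by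
  have h0 : L2Bd ρ (fun _ => 0) := fun M => ⟨0, by simp⟩
  induction N with
  | zero => exact h0
  | succ N ih => exact ⟨h0, fun i => ih.congr fun p _ => D_const 0 _ p⟩

lemma SobBd.iterate_D {ρ : ℝ} {f : Vec × ℝ → ℂ} (hf : ∀ N, SobBd ρ N f) (i : Fin 2) (n : ℕ) :
    ∀ N, SobBd ρ N ((D (ex i))^[n] f) := by
  induction n with
  | zero => exact hf
  | succ n ih =>
    intro N
    rw [Function.iterate_succ_apply']
    exact (ih (N + 1)).2 i

lemma wt_le (X : Vec) : wt X ≤ 2 * (1 + ‖X‖) ^ 2 := by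
  have h : ∀ i, X i ^ 2 ≤ ‖X‖ ^ 2 := fun i => by
    rw [← sq_abs (X i)]
    exact pow_le_pow_left₀ (abs_nonneg _) (norm_le_pi_norm X i) 2
  have h0 := h 0
  have h1 := h 1
  unfold wt
  nlinarith [norm_nonneg X]

/-- A Schwartz initial slice gives all weighted Sobolev bounds at the initial time. -/
lemma SobBd.of_schwartz {f : Vec × ℝ → ℂ} (hf : Sm f) (g : SchwartzMap Vec ℂ)
    (hg : ∀ X, g X = f (X, 0)) (N : ℕ) : SobBd 0 N f := by
  have h0 : ∀ g : SchwartzMap Vec ℂ, ∀ f : Vec × ℝ → ℂ, (∀ X, g X = f (X, 0)) → L2Bd 0 f := by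
    intro g f hg M
    obtain ⟨B, hB⟩ : ∃ B : ℝ, ∀ X, (1 + ‖X‖) ^ (2 * M) * ‖g X‖ ≤ B := by
      refine ⟨2 ^ (2 * M) * ((Finset.Iic (2 * M, 0)).sup
        fun m => SchwartzMap.seminorm ℝ m.1 m.2) g, fun X => ?_⟩
      have := SchwartzMap.one_add_le_sup_seminorm_apply (𝕜 := ℝ) (m := (2 * M, 0))
        (k := 2 * M) (n := 0) le_rfl le_rfl g X
      rw [norm_iteratedFDeriv_zero] at this
      exact this
    have hgint : Integrable (fun X => 2 ^ M * B * ‖g X‖) := g.integrable.norm.const_mul _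
    have hle : ∀ X, wt X ^ M * ‖g X‖ ^ 2 ≤ 2 ^ M * B * ‖g X‖ := by
      intro X
      have h1 : wt X ^ M ≤ 2 ^ M * (1 + ‖X‖) ^ (2 * M) := by
        rw [pow_mul, ← mul_pow]
        exact pow_le_pow_left₀ (wt_pos X).le (wt_le X) M
      calc wt X ^ M * ‖g X‖ ^ 2 ≤ 2 ^ M * (1 + ‖X‖) ^ (2 * M) * ‖g X‖ ^ 2 := by gcongr
        _ = 2 ^ M * ((1 + ‖X‖) ^ (2 * M) * ‖g X‖) * ‖g X‖ := by ring
        _ ≤ 2 ^ M * B * ‖g X‖ := by gcongr; exact hB X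
    refine ⟨∫ X, 2 ^ M * B * ‖g X‖, fun T hT => ?_⟩
    obtain rfl : T = 0 := le_antisymm hT.2 hT.1
    have hnn : ∀ X, 0 ≤ 2 ^ M * B * ‖g X‖ := fun X =>
      (by have := wt_pos X; positivity : 0 ≤ wt X ^ M * ‖g X‖ ^ 2).trans (hle X)
    rw [ofReal_integral_eq_lintegral_ofReal hgint (Filter.Eventually.of_forall hnn)]
    refine lintegral_mono fun X => ENNReal.ofReal_le_ofReal ?_
    rw [← hg]
    exact hle X
  induction N generalizing f g with
  | zero => exact h0 g f hg
  | succ N ih =>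
    refine ⟨h0 g f hg, fun i => ih (hf.D _) (LineDeriv.lineDerivOp (Pi.single i 1 : Vec) g)
      fun X => ?_⟩
    rw [SchwartzMap.lineDerivOp_apply_eq_fderiv, ← pd_slice hf i le_rfl, pd]
    congr 2
    exact funext hg

/-! ### A compactly supported weight shrinking at finite speed -/

/-- The weight `(1+|X|²)^M`, cut off to the region `√(1+|X|²) < R - bT`. -/
def cutW (R b : ℝ) (M : ℕ) (p : Vec × ℝ) : ℝ :=
  wt p.1 ^ M * Real.smoothTransition (R - b * p.2 - Real.sqrt (wt p.1))

lemma contDiff_cutW (R b : ℝ) (M : ℕ) : ContDiff ℝ (⊤ : ℕ∞) (cutW R b M) := by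
  have h1 : ContDiff ℝ (⊤ : ℕ∞) (fun p : Vec × ℝ => wt p.1) := contDiff_wt.comp contDiff_fst
  have h2 : ContDiff ℝ (⊤ : ℕ∞) (fun p : Vec × ℝ => Real.sqrt (wt p.1)) :=
    h1.sqrt fun p => (wt_pos _).ne'
  exact (h1.pow M).mul (Real.smoothTransition.contDiff.comp
    ((contDiff_const.sub (contDiff_const.mul contDiff_snd)).sub h2))

lemma cutW_nonneg (R b : ℝ) (M : ℕ) (p : Vec × ℝ) : 0 ≤ cutW R b M p :=
  mul_nonneg (pow_nonneg (wt_pos _).le _) (Real.smoothTransition.nonneg _)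

lemma cutW_le (R b : ℝ) (M : ℕ) (p : Vec × ℝ) : cutW R b M p ≤ wt p.1 ^ M :=
  mul_le_of_le_one_right (pow_nonneg (wt_pos _).le _) (Real.smoothTransition.le_one _)

lemma norm_le_sqrt_wt (X : Vec) : ‖X‖ ≤ Real.sqrt (wt X) := by
  rw [pi_norm_le_iff_of_nonneg (Real.sqrt_nonneg _)]
  intro i
  rw [Real.norm_eq_abs]
  refine Real.abs_le_sqrt ?_
  unfold wt
  fin_cases i
  · simp
    nlinarith [sq_nonneg (X 1)]
  · simp
    nlinarith [sq_nonneg (X 0)]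

lemma cutW_eq_zero {R b : ℝ} (hb : 0 ≤ b) (M : ℕ) {X : Vec} {T : ℝ} (hT : 0 ≤ T)
    (hX : X ∉ Metric.closedBall (0 : Vec) R) : cutW R b M (X, T) = 0 := by
  have h1 : R < ‖X‖ := by simpa using hX
  have h2 := norm_le_sqrt_wt X
  have h3 := mul_nonneg hb hT
  simp only [cutW]
  rw [Real.smoothTransition.zero_of_nonpos (by linarith), mul_zero]

/-- The finite-speed structure of the cut-off weight: up to `M` times the weight, its spatial
derivatives are dominated by its rate of decrease, if `b` is large. -/
lemma cutW_deriv (R b : ℝ) (M : ℕ) (p : Vec × ℝ) : ∃ A : ℝ, 0 ≤ A ∧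
    fderiv ℝ (cutW R b M) p et = -(b * A) ∧
    ∀ i, |fderiv ℝ (cutW R b M) p (ex i)| ≤ M * cutW R b M p + A := by
  obtain ⟨X, T⟩ := p
  have hd : DifferentiableAt ℝ (cutW R b M) (X, T) :=
    (contDiff_cutW R b M).differentiable (by simp) _
  have hw := wt_pos X
  have hψ : ∀ s, HasDerivAt Real.smoothTransition (deriv Real.smoothTransition s) s := fun s =>
    ((Real.smoothTransition.contDiff (n := 1)).differentiable (by simp) s).hasDerivAt
  set s := R - b * T - Real.sqrt (wt X) with hs
  have hψ' : 0 ≤ deriv Real.smoothTransition s := Real.smoothTransition.monotone.deriv_nonneg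
  refine ⟨wt X ^ M * deriv Real.smoothTransition s, by positivity, ?_, fun i => ?_⟩
  · have h1 := hd.hasFDerivAt.hasLineDerivAt et
    have h2 : HasDerivAt (fun t : ℝ => cutW R b M ((X, T) + t • et))
        (wt X ^ M * (deriv Real.smoothTransition s * -b)) 0 := by
      have h3 : HasDerivAt (fun t : ℝ => R - b * (T + t) - Real.sqrt (wt X)) (-b) 0 := by
        have := ((((hasDerivAt_id (0 : ℝ)).const_add T).const_mul b).const_sub R).sub_const
          (Real.sqrt (wt X))
        simpa using this
      have h4 : HasDerivAt Real.smoothTransition (deriv Real.smoothTransition s)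
          (R - b * (T + 0) - Real.sqrt (wt X)) := by
        have := hψ s
        simpa [hs] using this
      have h5 := (h4.comp (0 : ℝ) h3).const_mul (wt X ^ M)
      refine h5.congr_of_eventuallyEq (Filter.Eventually.of_forall fun t => ?_)
      simp [cutW, et]
    rw [HasDerivAt.unique h1 h2]
    ring
  · have h1 := hd.hasFDerivAt.hasLineDerivAt (ex i)
    have hX : HasDerivAt (fun t : ℝ => wt (X + t • (Pi.single i 1 : Vec))) (2 * X i) 0 := by
      have h3 : ∀ t : ℝ, wt (X + t • (Pi.single i 1 : Vec)) = wt X + (2 * X i * t + t ^ 2) := by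
        intro t
        fin_cases i
        · simp [wt]
          ring
        · simp [wt]
          ring
      simp only [h3]
      have := (((hasDerivAt_id (0 : ℝ)).const_mul (2 * X i)).add
        ((hasDerivAt_id (0 : ℝ)).pow 2)).const_add (wt X)
      simpa using this
    have hX0 : wt (X + (0 : ℝ) • (Pi.single i 1 : Vec)) = wt X := by simp
    have h2 : HasDerivAt (fun t : ℝ => cutW R b M ((X, T) + t • ex i))
        (M * wt X ^ (M - 1) * (2 * X i) * Real.smoothTransition s +
          wt X ^ M * (deriv Real.smoothTransition s * -(2 * X i / (2 * Real.sqrt (wt X))))) 0 := by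
      have h3 := hX.sqrt (by rw [hX0]; exact hw.ne')
      have h4 := (h3.const_sub (R - b * T))
      have h5 := HasDerivAt.comp (0 : ℝ) (by rw [hX0]; exact hψ s) h4
      have h6 := (hX.pow M).mul h5
      simp only [hX0, Function.comp] at h6
      refine HasDerivAt.congr_of_eventuallyEq (h6.congr_deriv ?_)
        (Filter.Eventually.of_forall fun t => ?_)
      · simp [hs]
      · simp [cutW, ex]
    rw [HasDerivAt.unique h1 h2]
    have hXi : |X i| ≤ Real.sqrt (wt X) := (norm_le_pi_norm X i).trans (norm_le_sqrt_wt X)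
    have hXi2 : |2 * X i| ≤ wt X := by
      have h3 := Real.sq_sqrt hw.le
      have h4 : X i ^ 2 + 1 ≤ wt X := by
        unfold wt
        fin_cases i
        · simp
          nlinarith [sq_nonneg (X 1)]
        · simp
          nlinarith [sq_nonneg (X 0)]
      rw [abs_le]
      constructor <;> nlinarith [sq_nonneg (X i - 1), sq_nonneg (X i + 1)]
    have hsq : 0 < Real.sqrt (wt X) := Real.sqrt_pos.2 hw
    refine (abs_add_le _ _).trans (add_le_add ?_ ?_)
    · rw [abs_mul, abs_mul, abs_mul, Nat.abs_cast, abs_of_nonneg (Real.smoothTransition.nonneg s),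
        abs_of_nonneg (pow_nonneg hw.le _)]
      simp only [cutW]
      rw [← hs, ← mul_assoc]
      refine mul_le_mul_of_nonneg_right ?_ (Real.smoothTransition.nonneg s)
      rcases M with _ | M
      · simp
      · rw [Nat.add_sub_cancel, mul_assoc, pow_succ (wt X) M]
        gcongr
    · rw [abs_mul, abs_mul, abs_neg, abs_of_nonneg (pow_nonneg hw.le _), abs_of_nonneg hψ']
      have h3 : |2 * X i / (2 * Real.sqrt (wt X))| ≤ 1 := by
        rw [mul_div_mul_left _ _ two_ne_zero, abs_div, abs_of_pos hsq]
        exact div_le_one_of_le₀ hXi hsq.le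
      calc _ ≤ wt X ^ M * (deriv Real.smoothTransition s * 1) := by gcongr
        _ = _ := by ring

/-! ### Integrals of functions with compact spatial support -/

lemma integrable_of_zero_off {h : Vec → ℝ} (hc : Continuous h) {R : ℝ}
    (h0 : ∀ X, X ∉ Metric.closedBall (0 : Vec) R → h X = 0) : Integrable h :=
  hc.integrable_of_hasCompactSupport (HasCompactSupport.intro (isCompact_closedBall 0 R) h0)

lemma contDiffAt_of_HS {G : Vec × ℝ → ℝ} (hG : ContDiffOn ℝ (⊤ : ℕ∞) G HS) {p : Vec × ℝ}
    (hp : 0 < p.2) : ContDiffAt ℝ (⊤ : ℕ∞) G p := hG.contDiffAt (HS_mem_nhds hp)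

lemma continuous_fderiv_slice {G : Vec × ℝ → ℝ} (hG : ContDiffOn ℝ (⊤ : ℕ∞) G HS)
    {T : ℝ} (hT : 0 < T) (v : Vec × ℝ) : Continuous fun X : Vec => fderiv ℝ G (X, T) v := by
  refine continuous_iff_continuousAt.2 fun X => ?_
  have h := ((contDiffAt_of_HS hG (p := (X, T)) hT).fderiv_right
    (m := ((⊤ : ℕ∞) : WithTop ℕ∞)) (by simp)).continuousAt
  have h2 : ContinuousAt (fun p => fderiv ℝ G p v) (X, T) := h.clm_apply continuousAt_const
  exact h2.comp (f := fun X : Vec => (X, T)) (by fun_prop)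

lemma hasDerivAt_time_real {G : Vec × ℝ → ℝ} (hG : ContDiffOn ℝ (⊤ : ℕ∞) G HS) {X : Vec} {T : ℝ}
    (hT : 0 < T) : HasDerivAt (fun t => G (X, t)) (fderiv ℝ G (X, T) et) T := by
  have h := ((contDiffAt_of_HS hG (p := (X, T)) hT).differentiableAt (by simp)).hasFDerivAt
  have h2 : HasDerivAt (fun t : ℝ => (X, t)) et T :=
    (hasDerivAt_const T X).prodMk (hasDerivAt_id T)
  exact h.comp_hasDerivAt T h2

lemma fderiv_et_eq_zero {G : Vec × ℝ → ℝ} (hG : ContDiffOn ℝ (⊤ : ℕ∞) G HS) {R : ℝ}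
    (h0 : ∀ X T, 0 ≤ T → X ∉ Metric.closedBall (0 : Vec) R → G (X, T) = 0) {X : Vec} {T : ℝ}
    (hT : 0 < T) (hX : X ∉ Metric.closedBall (0 : Vec) R) : fderiv ℝ G (X, T) et = 0 := by
  refine (hasDerivAt_time_real hG hT).unique
    ((hasDerivAt_const T (0 : ℝ)).congr_of_eventuallyEq ?_)
  filter_upwards [Ioi_mem_nhds hT] with t ht using h0 X t (le_of_lt ht) hX

lemma hasDerivAt_integral {G : Vec × ℝ → ℝ} (hG : ContDiffOn ℝ (⊤ : ℕ∞) G HS) {R : ℝ}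
    (h0 : ∀ X T, 0 ≤ T → X ∉ Metric.closedBall (0 : Vec) R → G (X, T) = 0) {T : ℝ} (hT : 0 < T) :
    Integrable (fun X : Vec => fderiv ℝ G (X, T) et) ∧
    HasDerivAt (fun t => ∫ X : Vec, G (X, t)) (∫ X : Vec, fderiv ℝ G (X, T) et) T := by
  have hcont : ContinuousOn (fun p => fderiv ℝ G p et) (Set.univ ×ˢ Set.Ioi 0) := fun p hp => by
    have h := ((contDiffAt_of_HS hG (p := p) hp.2).fderiv_right
      (m := ((⊤ : ℕ∞) : WithTop ℕ∞)) (by simp)).continuousAt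
    exact (h.clm_apply continuousAt_const).continuousWithinAt
  have hK : IsCompact (Metric.closedBall (0 : Vec) R ×ˢ Set.Icc (T / 2) (2 * T)) :=
    (isCompact_closedBall 0 R).prod isCompact_Icc
  obtain ⟨B, hB⟩ := hK.exists_bound_of_continuousOn (hcont.mono (by
    rintro ⟨X, t⟩ ⟨-, ht⟩
    exact ⟨trivial, lt_of_lt_of_le (half_pos hT) ht.1⟩))
  have hsl : ∀ t, 0 ≤ t → Continuous fun X : Vec => G (X, t) := fun t ht =>
    hG.continuousOn.comp_continuous (by fun_prop) fun X => mem_HS.2 ht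
  refine hasDerivAt_integral_of_dominated_loc_of_deriv_le (μ := (volume : Measure Vec))
    (F := fun t X => G (X, t)) (F' := fun t X => fderiv ℝ G (X, t) et)
    (bound := (Metric.closedBall (0 : Vec) R).indicator fun _ => B)
    (Icc_mem_nhds (by linarith : T / 2 < T) (by linarith : T < 2 * T)) ?_ ?_ ?_ ?_ ?_ ?_
  · filter_upwards [Ioi_mem_nhds hT] with t ht
    exact (hsl t (le_of_lt ht)).aestronglyMeasurable
  · exact integrable_of_zero_off (hsl T hT.le) (h0 · T hT.le)
  · exact (continuous_fderiv_slice hG hT et).aestronglyMeasurable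
  · refine Filter.Eventually.of_forall fun X t ht => ?_
    by_cases hX : X ∈ Metric.closedBall (0 : Vec) R
    · rw [Set.indicator_of_mem hX]
      exact hB (X, t) ⟨hX, ht⟩
    · rw [Set.indicator_of_notMem hX,
        fderiv_et_eq_zero hG h0 (lt_of_lt_of_le (half_pos hT) ht.1) hX, norm_zero]
  · exact (integrable_indicator_iff measurableSet_closedBall).2
      (integrableOn_const (isCompact_closedBall 0 R).measure_lt_top.ne)
  · exact Filter.Eventually.of_forall fun X t ht =>
      hasDerivAt_time_real hG (lt_of_lt_of_le (half_pos hT) ht.1)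

lemma integral_ex_eq_zero {G : Vec × ℝ → ℝ} (hG : ContDiffOn ℝ (⊤ : ℕ∞) G HS) {R : ℝ}
    (h0 : ∀ X T, 0 ≤ T → X ∉ Metric.closedBall (0 : Vec) R → G (X, T) = 0) {T : ℝ} (hT : 0 < T)
    (i : Fin 2) :
    Integrable (fun X : Vec => fderiv ℝ G (X, T) (ex i)) ∧
    ∫ X : Vec, fderiv ℝ G (X, T) (ex i) = 0 := by
  have hd : ∀ X, HasFDerivAt (fun Y : Vec => G (Y, T))
      ((fderiv ℝ G (X, T)).comp (ContinuousLinearMap.inl ℝ Vec ℝ)) X := fun X =>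
    ((contDiffAt_of_HS hG (p := (X, T)) hT).differentiableAt (by simp)).hasFDerivAt.comp X
      (hasFDerivAt_prodMk_left X T)
  have he : (fun X : Vec => fderiv ℝ G (X, T) (ex i)) =
      fun X => fderiv ℝ (fun Y : Vec => G (Y, T)) X (Pi.single i 1) := by
    funext X
    rw [(hd X).fderiv]
    simp [ex]
  have hcs : HasCompactSupport (fun Y : Vec => G (Y, T)) :=
    HasCompactSupport.intro (isCompact_closedBall 0 R) (h0 · T hT.le)
  have hi : Integrable (fun X : Vec => fderiv ℝ G (X, T) (ex i)) := by
    refine (continuous_fderiv_slice hG hT (ex i)).integrable_of_hasCompactSupport ?_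
    rw [he]
    exact hcs.fderiv_apply (𝕜 := ℝ) _
  refine ⟨hi, ?_⟩
  rw [he] at hi ⊢
  have hsl : Continuous fun X : Vec => G (X, T) :=
    continuous_iff_continuousAt.2 fun X => (hd X).continuousAt
  have := integral_mul_fderiv_eq_neg_fderiv_mul_of_integrable (μ := (volume : Measure Vec))
    (f := fun _ => (1 : ℝ)) (g := fun Y : Vec => G (Y, T)) (v := Pi.single i 1)
    (by simp) (by simpa using hi)
    (by simpa using hsl.integrable_of_hasCompactSupport hcs) (by simp)
    (fun X _ => (hd X).differentiableAt)
  simpa using this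

lemma gronwall_simple {y y' : ℝ → ℝ} {K S ρ : ℝ} (hK : 0 ≤ K) (hS : 0 ≤ S)
    (hc : ContinuousOn y (Set.Icc 0 ρ)) (hd : ∀ t ∈ Set.Ioo 0 ρ, HasDerivAt y (y' t) t)
    (hle : ∀ t ∈ Set.Ioo 0 ρ, y' t ≤ K * y t + S) (hy0 : 0 ≤ y 0) {T : ℝ}
    (hT : T ∈ Set.Icc 0 ρ) : y T ≤ Real.exp (K * ρ) * (y 0 + S * ρ) := by
  have hρ : 0 ≤ ρ := hT.1.trans hT.2
  have hg : ∀ t ∈ Set.Ioo 0 ρ, HasDerivAt (fun t => Real.exp (-K * t) * y t - S * t)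
      (Real.exp (-K * t) * (-K) * y t + Real.exp (-K * t) * y' t - S) t := by
    intro t ht
    have h1 : HasDerivAt (fun t => Real.exp (-K * t)) (Real.exp (-K * t) * (-K)) t := by
      simpa using ((hasDerivAt_id t).const_mul (-K)).exp
    have h2 : HasDerivAt (fun t => S * t) S t := by
      simpa using (hasDerivAt_id t).const_mul S
    exact (h1.mul (hd t ht)).sub h2
  have hanti : AntitoneOn (fun t => Real.exp (-K * t) * y t - S * t) (Set.Icc 0 ρ) := by
    refine antitoneOn_of_deriv_nonpos (convex_Icc 0 ρ) ?_ ?_ ?_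
    · exact ((by fun_prop : Continuous fun t => Real.exp (-K * t)).continuousOn.mul hc).sub
        (by fun_prop)
    · rw [interior_Icc]
      exact fun t ht => (hg t ht).differentiableAt.differentiableWithinAt
    · rw [interior_Icc]
      intro t ht
      rw [(hg t ht).deriv]
      have h1 : Real.exp (-K * t) ≤ 1 := Real.exp_le_one_iff.2 (by nlinarith [ht.1])
      have h2 := Real.exp_pos (-K * t)
      have h3 := mul_le_mul_of_nonneg_left (hle t ht) h2.le
      nlinarith
  have h := hanti ⟨le_rfl, hρ⟩ hT hT.1
  simp only [mul_zero, Real.exp_zero, one_mul, sub_zero] at h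
  have h1 : Real.exp (-K * T) * y T ≤ y 0 + S * ρ := by nlinarith [hT.2]
  have h2 : y T = Real.exp (K * T) * (Real.exp (-K * T) * y T) := by
    rw [← mul_assoc, ← Real.exp_add]
    simp
  rw [h2]
  have h3 : Real.exp (K * T) ≤ Real.exp (K * ρ) :=
    Real.exp_le_exp.2 (mul_le_mul_of_nonneg_left hT.2 hK)
  have h4 : 0 ≤ y 0 + S * ρ := by positivity
  calc _ ≤ Real.exp (K * T) * (y 0 + S * ρ) := by gcongr
    _ ≤ _ := by gcongr

/-! ### The energy estimate -/

/-- The Dirac system solved for the time derivatives, with right-hand sides `F₁`, `F₂`.  Here `c`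
is the propagation speed and `q` is `i` times the real mass term. -/
structure Sys (c : ℝ) (q : Vec → ℂ) (a₁ a₂ F₁ F₂ : Vec × ℝ → ℂ) : Prop where
  eq₁ : ∀ p ∈ HS, D et a₁ p =
    c * (D (ex 0) a₂ p + Complex.I * D (ex 1) a₂ p) + q p.1 * a₁ p + F₁ p
  eq₂ : ∀ p ∈ HS, D et a₂ p =
    c * (D (ex 0) a₁ p - Complex.I * D (ex 1) a₁ p) - q p.1 * a₂ p + F₂ p

/-- The energy density `|a₁|² + |a₂|²`. -/
def dens (a₁ a₂ : Vec × ℝ → ℂ) (p : Vec × ℝ) : ℝ :=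
  (a₁ p).re ^ 2 + (a₁ p).im ^ 2 + ((a₂ p).re ^ 2 + (a₂ p).im ^ 2)

/-- The first flux component `Re (ā₁ a₂)`. -/
def flux₀ (a₁ a₂ : Vec × ℝ → ℂ) (p : Vec × ℝ) : ℝ :=
  (a₁ p).re * (a₂ p).re + (a₁ p).im * (a₂ p).im

/-- The second flux component `Re (i ā₁ a₂)`. -/
def flux₁ (a₁ a₂ : Vec × ℝ → ℂ) (p : Vec × ℝ) : ℝ :=
  (a₁ p).im * (a₂ p).re - (a₁ p).re * (a₂ p).im

lemma dens_eq (a₁ a₂ : Vec × ℝ → ℂ) (p : Vec × ℝ) :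
    dens a₁ a₂ p = ‖a₁ p‖ ^ 2 + ‖a₂ p‖ ^ 2 := by
  simp only [dens, Complex.sq_norm, Complex.normSq_apply]
  ring

lemma Sm.re {a : Vec × ℝ → ℂ} (ha : Sm a) : ContDiffOn ℝ (⊤ : ℕ∞) (fun p => (a p).re) HS :=
  Complex.reCLM.contDiff.comp_contDiffOn ha

lemma Sm.im {a : Vec × ℝ → ℂ} (ha : Sm a) : ContDiffOn ℝ (⊤ : ℕ∞) (fun p => (a p).im) HS :=
  Complex.imCLM.contDiff.comp_contDiffOn ha

lemma contDiffOn_dens {a₁ a₂ : Vec × ℝ → ℂ} (h₁ : Sm a₁) (h₂ : Sm a₂) :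
    ContDiffOn ℝ (⊤ : ℕ∞) (dens a₁ a₂) HS :=
  ((h₁.re.pow 2).add (h₁.im.pow 2)).add ((h₂.re.pow 2).add (h₂.im.pow 2))

lemma contDiffOn_flux₀ {a₁ a₂ : Vec × ℝ → ℂ} (h₁ : Sm a₁) (h₂ : Sm a₂) :
    ContDiffOn ℝ (⊤ : ℕ∞) (flux₀ a₁ a₂) HS :=
  (h₁.re.mul h₂.re).add (h₁.im.mul h₂.im)

lemma contDiffOn_flux₁ {a₁ a₂ : Vec × ℝ → ℂ} (h₁ : Sm a₁) (h₂ : Sm a₂) :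
    ContDiffOn ℝ (⊤ : ℕ∞) (flux₁ a₁ a₂) HS :=
  (h₁.im.mul h₂.re).sub (h₁.re.mul h₂.im)

section pointwise

variable {a₁ a₂ : Vec × ℝ → ℂ} (h₁ : Sm a₁) (h₂ : Sm a₂) {p : Vec × ℝ} (hp : 0 < p.2)

lemma hasFDerivAt_re {a : Vec × ℝ → ℂ} (ha : Sm a) {p : Vec × ℝ} (hp : 0 < p.2) :
    HasFDerivAt (fun p => (a p).re) (Complex.reCLM.comp (fderivWithin ℝ a HS p)) p :=
  Complex.reCLM.hasFDerivAt.comp p (ha.hasFDerivAt hp)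

lemma hasFDerivAt_im {a : Vec × ℝ → ℂ} (ha : Sm a) {p : Vec × ℝ} (hp : 0 < p.2) :
    HasFDerivAt (fun p => (a p).im) (Complex.imCLM.comp (fderivWithin ℝ a HS p)) p :=
  Complex.imCLM.hasFDerivAt.comp p (ha.hasFDerivAt hp)

include h₁ h₂ hp

lemma fderiv_dens (v : Vec × ℝ) : fderiv ℝ (dens a₁ a₂) p v =
    2 * ((a₁ p).re * (D v a₁ p).re + (a₁ p).im * (D v a₁ p).im +
      ((a₂ p).re * (D v a₂ p).re + (a₂ p).im * (D v a₂ p).im)) := by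
  have h := (((hasFDerivAt_re h₁ hp).pow 2).add ((hasFDerivAt_im h₁ hp).pow 2)).add
    (((hasFDerivAt_re h₂ hp).pow 2).add ((hasFDerivAt_im h₂ hp).pow 2))
  have h' : HasFDerivAt (dens a₁ a₂) _ p := h
  rw [h'.fderiv]
  simp [D]
  ring

lemma fderiv_flux₀ (v : Vec × ℝ) : fderiv ℝ (flux₀ a₁ a₂) p v =
    (a₁ p).re * (D v a₂ p).re + (a₂ p).re * (D v a₁ p).re +
      ((a₁ p).im * (D v a₂ p).im + (a₂ p).im * (D v a₁ p).im) := by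
  have h := ((hasFDerivAt_re h₁ hp).mul (hasFDerivAt_re h₂ hp)).add
    ((hasFDerivAt_im h₁ hp).mul (hasFDerivAt_im h₂ hp))
  have h' : HasFDerivAt (flux₀ a₁ a₂) _ p := h
  rw [h'.fderiv]
  simp [D]

lemma fderiv_flux₁ (v : Vec × ℝ) : fderiv ℝ (flux₁ a₁ a₂) p v =
    (a₁ p).im * (D v a₂ p).re + (a₂ p).re * (D v a₁ p).im -
      ((a₁ p).re * (D v a₂ p).im + (a₂ p).im * (D v a₁ p).re) := by
  have h := ((hasFDerivAt_im h₁ hp).mul (hasFDerivAt_re h₂ hp)).sub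
    ((hasFDerivAt_re h₁ hp).mul (hasFDerivAt_im h₂ hp))
  have h' : HasFDerivAt (flux₁ a₁ a₂) _ p := h
  rw [h'.fderiv]
  simp [D]

/-- The local energy identity.  The mass term drops out because `q` is imaginary. -/
lemma local_energy {c : ℝ} {q : Vec → ℂ} (hq : ∀ X, (q X).re = 0) {F₁ F₂ : Vec × ℝ → ℂ}
    (hs : Sys c q a₁ a₂ F₁ F₂) :
    fderiv ℝ (dens a₁ a₂) p et =
      2 * c * fderiv ℝ (flux₀ a₁ a₂) p (ex 0) + 2 * c * fderiv ℝ (flux₁ a₁ a₂) p (ex 1) +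
      2 * ((a₁ p).re * (F₁ p).re + (a₁ p).im * (F₁ p).im +
        ((a₂ p).re * (F₂ p).re + (a₂ p).im * (F₂ p).im)) := by
  rw [fderiv_dens h₁ h₂ hp, fderiv_flux₀ h₁ h₂ hp, fderiv_flux₁ h₁ h₂ hp,
    hs.eq₁ p (mem_HS'.2 hp.le), hs.eq₂ p (mem_HS'.2 hp.le)]
  simp [hq]
  ring

/-- The differential inequality behind the energy estimate: with cut-off speed `2c` the loss at
the edge of the cut-off absorbs the flux. -/
lemma energy_pointwise {c : ℝ} (hc : 0 ≤ c) {q : Vec → ℂ} (hq : ∀ X, (q X).re = 0)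
    {F₁ F₂ : Vec × ℝ → ℂ} (hs : Sys c q a₁ a₂ F₁ F₂) (R : ℝ) (M : ℕ) :
    fderiv ℝ (fun p => cutW R (2 * c) M p * dens a₁ a₂ p) p et
      - 2 * c * fderiv ℝ (fun p => cutW R (2 * c) M p * flux₀ a₁ a₂ p) p (ex 0)
      - 2 * c * fderiv ℝ (fun p => cutW R (2 * c) M p * flux₁ a₁ a₂ p) p (ex 1)
    ≤ (2 * c * M + 1) * (cutW R (2 * c) M p * dens a₁ a₂ p)
      + cutW R (2 * c) M p * dens F₁ F₂ p := by
  have hφ : DifferentiableAt ℝ (cutW R (2 * c) M) p :=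
    (contDiff_cutW R (2 * c) M).differentiable (by simp) p
  have hprod : ∀ (k : Vec × ℝ → ℝ), ContDiffOn ℝ (⊤ : ℕ∞) k HS → ∀ v,
      fderiv ℝ (fun p => cutW R (2 * c) M p * k p) p v =
        cutW R (2 * c) M p * fderiv ℝ k p v + k p * fderiv ℝ (cutW R (2 * c) M) p v := by
    intro k hk v
    rw [fderiv_fun_mul hφ ((contDiffAt_of_HS hk hp).differentiableAt (by simp))]
    simp
  rw [hprod _ (contDiffOn_dens h₁ h₂), hprod _ (contDiffOn_flux₀ h₁ h₂),
    hprod _ (contDiffOn_flux₁ h₁ h₂), local_energy h₁ h₂ hp hq hs]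
  obtain ⟨A, hA, hAt, hAx⟩ := cutW_deriv R (2 * c) M p
  rw [hAt]
  set φ := cutW R (2 * c) M p
  have hφ0 : 0 ≤ φ := cutW_nonneg _ _ _ _
  set x := fderiv ℝ (cutW R (2 * c) M) p (ex 0)
  set y := fderiv ℝ (cutW R (2 * c) M) p (ex 1)
  have hx : |x| ≤ M * φ + A := hAx 0
  have hy : |y| ≤ M * φ + A := hAx 1
  set e := dens a₁ a₂ p with he
  have he0 : 0 ≤ e := by rw [he]; unfold dens; positivity
  have hbd : ∀ J z : ℝ, |2 * J| ≤ e → |z| ≤ M * φ + A → -(2 * J * z) ≤ e * (M * φ + A) := by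
    intro J z hJ hz
    calc -(2 * J * z) ≤ |2 * J * z| := neg_le_abs _
      _ = |2 * J| * |z| := abs_mul _ _
      _ ≤ e * (M * φ + A) := by gcongr
  have hJ0 := hbd (flux₀ a₁ a₂ p) x (by
    rw [he, abs_le]
    unfold flux₀ dens
    constructor <;> nlinarith [sq_nonneg ((a₁ p).re - (a₂ p).re),
      sq_nonneg ((a₁ p).im - (a₂ p).im), sq_nonneg ((a₁ p).re + (a₂ p).re),
      sq_nonneg ((a₁ p).im + (a₂ p).im)]) hx
  have hJ1 := hbd (flux₁ a₁ a₂ p) y (by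
    rw [he, abs_le]
    unfold flux₁ dens
    constructor <;> nlinarith [sq_nonneg ((a₁ p).re - (a₂ p).im),
      sq_nonneg ((a₁ p).im - (a₂ p).re), sq_nonneg ((a₁ p).re + (a₂ p).im),
      sq_nonneg ((a₁ p).im + (a₂ p).re)]) hy
  have hF : 2 * ((a₁ p).re * (F₁ p).re + (a₁ p).im * (F₁ p).im +
        ((a₂ p).re * (F₂ p).re + (a₂ p).im * (F₂ p).im)) ≤ e + dens F₁ F₂ p := by
    rw [he]
    unfold dens
    nlinarith [sq_nonneg ((a₁ p).re - (F₁ p).re), sq_nonneg ((a₁ p).im - (F₁ p).im),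
      sq_nonneg ((a₂ p).re - (F₂ p).re), sq_nonneg ((a₂ p).im - (F₂ p).im)]
  have hF' := mul_le_mul_of_nonneg_left hF hφ0
  have hJ0' := mul_le_mul_of_nonneg_left hJ0 hc
  have hJ1' := mul_le_mul_of_nonneg_left hJ1 hc
  nlinarith

end pointwise

lemma integral_cutW_le (R b : ℝ) (M : ℕ) {a₁ a₂ : Vec × ℝ → ℂ} (h₁ : Sm a₁)
    (h₂ : Sm a₂) {T C₁ C₂ : ℝ} (hT : 0 ≤ T)
    (hC₁ : ∫⁻ X : Vec, ENNReal.ofReal (wt X ^ M * ‖a₁ (X, T)‖ ^ 2) ≤ ENNReal.ofReal C₁)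
    (hC₂ : ∫⁻ X : Vec, ENNReal.ofReal (wt X ^ M * ‖a₂ (X, T)‖ ^ 2) ≤ ENNReal.ofReal C₂) :
    ∫ X : Vec, cutW R b M (X, T) * dens a₁ a₂ (X, T) ≤ max C₁ 0 + max C₂ 0 := by
  have hdc : Continuous fun X : Vec => dens a₁ a₂ (X, T) :=
    (contDiffOn_dens h₁ h₂).continuousOn.comp_continuous (by fun_prop) fun X => mem_HS.2 hT
  have hwc : Continuous fun X : Vec => cutW R b M (X, T) :=
    (contDiff_cutW R b M).continuous.comp (by fun_prop)
  have hd0 : ∀ p, 0 ≤ dens a₁ a₂ p := fun p => by unfold dens; positivity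
  rw [integral_eq_lintegral_of_nonneg_ae
    (Filter.Eventually.of_forall fun X => mul_nonneg (cutW_nonneg _ _ _ _) (hd0 _))
    (hwc.mul hdc).aestronglyMeasurable]
  refine ENNReal.toReal_le_of_le_ofReal (by positivity) ?_
  rw [ENNReal.ofReal_add (le_max_right _ _) (le_max_right _ _)]
  refine le_trans ?_ (add_le_add (hC₁.trans (ENNReal.ofReal_le_ofReal (le_max_left _ 0)))
    (hC₂.trans (ENNReal.ofReal_le_ofReal (le_max_left _ 0))))
  have hm : Measurable fun X : Vec => ENNReal.ofReal (wt X ^ M * ‖a₁ (X, T)‖ ^ 2) :=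
    ENNReal.measurable_ofReal.comp (Continuous.measurable
      ((continuous_wt.pow M).mul ((h₁.continuous_slice hT).norm.pow 2)))
  rw [← lintegral_add_left hm]
  refine lintegral_mono fun X => ?_
  have hw := wt_pos X
  rw [← ENNReal.ofReal_add (by positivity) (by positivity), ← mul_add, ← dens_eq]
  exact ENNReal.ofReal_le_ofReal (mul_le_mul_of_nonneg_right (cutW_le _ _ _ _) (hd0 _))

/-- The weighted `L²` energy estimate.  Since only local smoothness is known uniformly in time, the
estimate is first proved with cut-off weights, with constants independent of the cut-off radius. -/
lemma energy_estimate {c : ℝ} (hc : 0 ≤ c) {q : Vec → ℂ} (hq : ∀ X, (q X).re = 0)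
    {a₁ a₂ F₁ F₂ : Vec × ℝ → ℂ} (h₁ : Sm a₁) (h₂ : Sm a₂) (hF₁ : Sm F₁) (hF₂ : Sm F₂)
    (hs : Sys c q a₁ a₂ F₁ F₂) {ρ : ℝ}
    (hB₁ : L2Bd ρ F₁) (hB₂ : L2Bd ρ F₂) (hI₁ : L2Bd 0 a₁) (hI₂ : L2Bd 0 a₂) :
    L2Bd ρ a₁ ∧ L2Bd ρ a₂ := by
  have key : ∀ M : ℕ, ∃ C : ℝ, ∀ T ∈ Set.Icc (0 : ℝ) ρ,
      ∫⁻ X : Vec, ENNReal.ofReal (wt X ^ M * dens a₁ a₂ (X, T)) ≤ ENNReal.ofReal C := by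
    intro M
    obtain ⟨S₁, hS₁⟩ := hB₁ M
    obtain ⟨S₂, hS₂⟩ := hB₂ M
    obtain ⟨I₁, hI₁⟩ := hI₁ M
    obtain ⟨I₂, hI₂⟩ := hI₂ M
    set S := max S₁ 0 + max S₂ 0 with hS
    have hS0 : 0 ≤ S := by positivity
    have hd0 : ∀ p, 0 ≤ dens a₁ a₂ p := fun p => by unfold dens; positivity
    have hb : 0 ≤ 2 * c := by positivity
    have hφ : ∀ R, ContDiffOn ℝ (⊤ : ℕ∞) (cutW R (2 * c) M) HS := fun R =>
      (contDiff_cutW R (2 * c) M).contDiffOn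
    have hwc : ∀ R T, Continuous fun X : Vec => cutW R (2 * c) M (X, T) := fun R T =>
      (contDiff_cutW R (2 * c) M).continuous.comp (by fun_prop)
    have hslice : ∀ {k : Vec × ℝ → ℝ}, ContDiffOn ℝ (⊤ : ℕ∞) k HS → ∀ {T}, 0 ≤ T →
        Continuous fun X : Vec => k (X, T) := fun hk T hT =>
      hk.continuousOn.comp_continuous (by fun_prop) fun X => mem_HS.2 hT
    have hzero : ∀ (R : ℝ) (k : Vec × ℝ → ℝ) (X : Vec) (T : ℝ), 0 ≤ T →
        X ∉ Metric.closedBall (0 : Vec) R → cutW R (2 * c) M (X, T) * k (X, T) = 0 := by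
      intro R k X T hT hX
      rw [cutW_eq_zero hb M hT hX, zero_mul]
    -- the bound for the truncated energies, uniform in the cut-off radius
    have htrunc : ∀ R : ℝ, ∀ T ∈ Set.Icc (0 : ℝ) ρ,
        ∫ X : Vec, cutW R (2 * c) M (X, T) * dens a₁ a₂ (X, T) ≤
          Real.exp ((2 * c * M + 1) * ρ) * ((max I₁ 0 + max I₂ 0) + S * ρ) := by
      intro R T hT
      have hG := (hφ R).mul (contDiffOn_dens h₁ h₂)
      have hH0 := (hφ R).mul (contDiffOn_flux₀ h₁ h₂)
      have hH1 := (hφ R).mul (contDiffOn_flux₁ h₁ h₂)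
      have hg := gronwall_simple (K := 2 * c * M + 1) (S := S) (ρ := ρ)
        (y := fun t => ∫ X : Vec, cutW R (2 * c) M (X, t) * dens a₁ a₂ (X, t))
        (y' := fun t => ∫ X : Vec,
          fderiv ℝ (fun p => cutW R (2 * c) M p * dens a₁ a₂ p) (X, t) et)
        (by positivity) hS0 ?_ ?_ ?_
        (integral_nonneg fun X => mul_nonneg (cutW_nonneg _ _ _ _) (hd0 _)) hT
      · refine hg.trans ?_
        have hρ : 0 ≤ ρ := hT.1.trans hT.2
        gcongr
        exact integral_cutW_le R _ M h₁ h₂ le_rfl (hI₁ 0 ⟨le_rfl, le_rfl⟩) (hI₂ 0 ⟨le_rfl, le_rfl⟩)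
      · refine continuousOn_integral_of_compact_support (isCompact_closedBall (0 : Vec) R) ?_
          (fun t X ht hX => hzero R _ X t ht.1 hX)
        refine (hG.continuousOn.comp (f := fun r : ℝ × Vec => (r.2, r.1)) (by fun_prop) ?_)
        exact fun r hr => mem_HS.2 hr.1.1
      · exact fun t ht => (hasDerivAt_integral hG (hzero R _) ht.1).2
      · intro t ht
        have hi := (hasDerivAt_integral hG (hzero R _) ht.1).1
        obtain ⟨hi0, hz0⟩ := integral_ex_eq_zero hH0 (hzero R _) ht.1 0
        obtain ⟨hi1, hz1⟩ := integral_ex_eq_zero hH1 (hzero R _) ht.1 1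
        have hie : Integrable fun X : Vec => cutW R (2 * c) M (X, t) * dens a₁ a₂ (X, t) :=
          integrable_of_zero_off ((hwc R t).mul (hslice (contDiffOn_dens h₁ h₂) ht.1.le))
            (hzero R _ · t ht.1.le)
        have hiF : Integrable fun X : Vec => cutW R (2 * c) M (X, t) * dens F₁ F₂ (X, t) :=
          integrable_of_zero_off ((hwc R t).mul (hslice (contDiffOn_dens hF₁ hF₂) ht.1.le))
            (hzero R _ · t ht.1.le)
        have hmono := integral_mono ((hi.sub (hi0.const_mul (2 * c))).sub (hi1.const_mul (2 * c)))
          ((hie.const_mul (2 * c * M + 1)).add hiF)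
          (fun X => energy_pointwise h₁ h₂ (p := (X, t)) ht.1 hc hq hs R M)
        have e1 := integral_sub (hi.sub (hi0.const_mul (2 * c))) (hi1.const_mul (2 * c))
        have e2 := integral_sub hi (hi0.const_mul (2 * c))
        have e3 := integral_add (hie.const_mul (2 * c * M + 1)) hiF
        rw [integral_const_mul] at e1 e2 e3
        have hSF := integral_cutW_le R (2 * c) M hF₁ hF₂ ht.1.le
          (hS₁ t ⟨ht.1.le, ht.2.le⟩) (hS₂ t ⟨ht.1.le, ht.2.le⟩)
        simp only [Pi.sub_apply, Pi.add_apply] at hmono e1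
        rw [e1, e2, e3] at hmono
        rw [hz0, hz1] at hmono
        linarith
    -- monotone convergence as the cut-off is removed
    refine ⟨Real.exp ((2 * c * M + 1) * ρ) * (max I₁ 0 + max I₂ 0 + S * ρ), fun T hT => ?_⟩
    have hlim := lintegral_tendsto_of_tendsto_of_monotone (μ := (volume : Measure Vec))
      (f := fun (n : ℕ) X => ENNReal.ofReal (cutW n (2 * c) M (X, T) * dens a₁ a₂ (X, T)))
      (F := fun X => ENNReal.ofReal (wt X ^ M * dens a₁ a₂ (X, T))) ?_ ?_ ?_
    · refine le_of_tendsto' hlim fun n => ?_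
      rw [← ofReal_integral_eq_lintegral_ofReal]
      · exact ENNReal.ofReal_le_ofReal (htrunc n T hT)
      · exact integrable_of_zero_off ((hwc n T).mul (hslice (contDiffOn_dens h₁ h₂) hT.1))
            (hzero n _ · T hT.1)
      · exact Filter.Eventually.of_forall fun X => mul_nonneg (cutW_nonneg _ _ _ _) (hd0 _)
    · exact fun n => (ENNReal.measurable_ofReal.comp (Continuous.measurable
        ((hwc n T).mul (hslice (contDiffOn_dens h₁ h₂) hT.1)))).aemeasurable
    · refine Filter.Eventually.of_forall fun X n m hnm => ENNReal.ofReal_le_ofReal ?_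
      refine mul_le_mul_of_nonneg_right ?_ (hd0 _)
      refine mul_le_mul_of_nonneg_left ?_ (pow_nonneg (wt_pos _).le _)
      refine Real.smoothTransition.monotone ?_
      have : (n : ℝ) ≤ m := by exact_mod_cast hnm
      simp only
      linarith
    · refine Filter.Eventually.of_forall fun X => ?_
      refine tendsto_const_nhds.congr' ?_
      obtain ⟨n₀, hn₀⟩ := exists_nat_ge (1 + 2 * c * T + Real.sqrt (wt X))
      filter_upwards [Filter.eventually_ge_atTop n₀] with n hn
      have : (n₀ : ℝ) ≤ n := by exact_mod_cast hn
      simp only [cutW]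
      rw [Real.smoothTransition.one_of_one_le (by linarith), mul_one]
  constructor
  · intro M
    obtain ⟨C, hC⟩ := key M
    refine ⟨C, fun T hT => (lintegral_mono fun X => ENNReal.ofReal_le_ofReal ?_).trans (hC T hT)⟩
    rw [dens_eq]
    have := wt_pos X
    gcongr
    nlinarith [sq_nonneg ‖a₂ (X, T)‖]
  · intro M
    obtain ⟨C, hC⟩ := key M
    refine ⟨C, fun T hT => (lintegral_mono fun X => ENNReal.ofReal_le_ofReal ?_).trans (hC T hT)⟩
    rw [dens_eq]
    have := wt_pos X
    gcongr
    nlinarith [sq_nonneg ‖a₁ (X, T)‖]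

/-- Derivatives of a solution solve the system with source terms of lower order. -/
lemma Sys.deriv {c : ℝ} {q : Vec → ℂ} (hqs : BddSmooth q)
    {a₁ a₂ F₁ F₂ : Vec × ℝ → ℂ} (h₁ : Sm a₁) (h₂ : Sm a₂) (hF₁ : Sm F₁) (hF₂ : Sm F₂)
    (hs : Sys c q a₁ a₂ F₁ F₂) (v : Vec × ℝ) :
    Sys c q (D v a₁) (D v a₂) (fun p => D v F₁ p + D v (fun p => q p.1) p * a₁ p)
      (fun p => D v F₂ p + -1 * (D v (fun p => q p.1) p * a₂ p)) := by
  constructor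
  · intro p hp
    have e : Set.EqOn (D et a₁) (fun p => (c * (D (ex 0) a₂ p + Complex.I * D (ex 1) a₂ p)
      + q p.1 * a₁ p) + F₁ p) HS := fun p hp => hs.eq₁ p hp
    have s1 : Sm (fun p => Complex.I * D (ex 1) a₂ p) := (Sm.const _).mul (h₂.D _)
    have s2 := (h₂.D (ex 0)).add s1
    have s3 := (Sm.const (c : ℂ)).mul s2
    have s4 := hqs.sm.mul h₁
    rw [D_comm h₁ et v hp, D_congr e v hp, D_add (s3.add s4) hF₁ v hp, D_add s3 s4 v hp,
      D_const_mul _ s2 v hp, D_add (h₂.D _) s1 v hp, D_const_mul _ (h₂.D _) v hp,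
      D_mul hqs.sm h₁ v hp, D_comm h₂ v (ex 0) hp, D_comm h₂ v (ex 1) hp]
    ring
  · intro p hp
    have e : Set.EqOn (D et a₂) (fun p => (c * (D (ex 0) a₁ p + -Complex.I * D (ex 1) a₁ p)
      + -1 * (q p.1 * a₂ p)) + F₂ p) HS := fun p hp => by
        rw [hs.eq₂ p hp]
        ring
    have s1 : Sm (fun p => -Complex.I * D (ex 1) a₁ p) := (Sm.const _).mul (h₁.D _)
    have s2 := (h₁.D (ex 0)).add s1
    have s3 := (Sm.const (c : ℂ)).mul s2
    have s4 := hqs.sm.mul h₂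
    have s5 := (Sm.const (-1)).mul s4
    rw [D_comm h₂ et v hp, D_congr e v hp, D_add (s3.add s5) hF₂ v hp, D_add s3 s5 v hp,
      D_const_mul _ s2 v hp, D_add (h₁.D _) s1 v hp, D_const_mul _ (h₁.D _) v hp,
      D_const_mul _ s4 v hp,
      D_mul hqs.sm h₂ v hp, D_comm h₁ v (ex 0) hp, D_comm h₁ v (ex 1) hp]
    ring

/-- Weighted Sobolev bounds of all orders propagate in time, by induction on the order. -/
lemma sobolev_estimate {c : ℝ} (hc : 0 ≤ c) {q : Vec → ℂ} (hqs : BddSmooth q)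
    (hq : ∀ X, (q X).re = 0) {ρ : ℝ} (N : ℕ)
    {a₁ a₂ F₁ F₂ : Vec × ℝ → ℂ} (h₁ : Sm a₁) (h₂ : Sm a₂) (hF₁ : Sm F₁) (hF₂ : Sm F₂)
    (hs : Sys c q a₁ a₂ F₁ F₂)
    (hB₁ : SobBd ρ N F₁) (hB₂ : SobBd ρ N F₂) (hI₁ : SobBd 0 N a₁) (hI₂ : SobBd 0 N a₂) :
    SobBd ρ N a₁ ∧ SobBd ρ N a₂ := by
  induction N generalizing a₁ a₂ F₁ F₂ with
  | zero => exact energy_estimate hc hq h₁ h₂ hF₁ hF₂ hs hB₁ hB₂ hI₁ hI₂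
  | succ N ih =>
    obtain ⟨k₁, k₂⟩ := ih h₁ h₂ hF₁ hF₂ hs hB₁.pred hB₂.pred hI₁.pred hI₂.pred
    have hstep : ∀ i, SobBd ρ N (D (ex i) a₁) ∧ SobBd ρ N (D (ex i) a₂) := by
      intro i
      have t₁ := (hqs.sm.D (ex i)).mul h₁
      have t₂ := (hqs.sm.D (ex i)).mul h₂
      have hm : ∀ a, Sm a → SobBd ρ N a →
          SobBd ρ N (fun p => D (ex i) (fun p => q p.1) p * a p) := fun a ha hb =>
        (hb.mul ha (hqs.pd i)).congr fun p hp => by rw [D_ex_fst hqs i hp]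
      have hm₂ := (hm a₂ h₂ k₂).mul t₂ (BddSmooth.const (-1))
      refine ih (h₁.D _) (h₂.D _) ((hF₁.D _).add t₁)
        ((hF₂.D _).add ((Sm.const (-1)).mul t₂)) (hs.deriv hqs h₁ h₂ hF₁ hF₂ (ex i))
        ((hB₁.2 i).add (hm a₁ h₁ k₁) (hF₁.D _) t₁)
        ((hB₂.2 i).add hm₂ (hF₂.D _) ((Sm.const (-1)).mul t₂)) (hI₁.2 i) (hI₂.2 i)
    exact ⟨⟨k₁.l2Bd, fun i => (hstep i).1⟩, ⟨k₂.l2Bd, fun i => (hstep i).2⟩⟩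

/-- Time derivatives of solutions of the homogeneous system are again solutions, and the system
expresses them through spatial derivatives. -/
lemma time_derivatives {c : ℝ} {q : Vec → ℂ} (hqs : BddSmooth q) {ρ : ℝ}
    {a₁ a₂ : Vec × ℝ → ℂ} (h₁ : Sm a₁) (h₂ : Sm a₂)
    (hs : Sys c q a₁ a₂ (fun _ => 0) (fun _ => 0))
    (hB₁ : ∀ N, SobBd ρ N a₁) (hB₂ : ∀ N, SobBd ρ N a₂) (l : ℕ) :
    (∀ N, SobBd ρ N ((D et)^[l] a₁)) ∧ (∀ N, SobBd ρ N ((D et)^[l] a₂)) := by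
  induction l generalizing a₁ a₂ with
  | zero => exact ⟨hB₁, hB₂⟩
  | succ l ih =>
    rw [Function.iterate_succ_apply, Function.iterate_succ_apply]
    have hs' : Sys c q (D et a₁) (D et a₂) (fun _ => 0) (fun _ => 0) := by
      have h := hs.deriv hqs h₁ h₂ (Sm.const 0) (Sm.const 0) et
      constructor
      · intro p hp
        rw [h.eq₁ p hp, D_const, D_et_fst hqs hp]
        ring
      · intro p hp
        rw [h.eq₂ p hp, D_const, D_et_fst hqs hp]
        ring
    have hcomb : ∀ (z : ℂ) (a b : Vec × ℝ → ℂ) (σ : ℂ), Sm a → Sm b → (∀ N, SobBd ρ N a) →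
        (∀ N, SobBd ρ N b) → ∀ N, SobBd ρ N (fun p =>
          c * (D (ex 0) b p + z * D (ex 1) b p) + σ * (q p.1 * a p)) := by
      intro z a b σ ha hb ka kb N
      have s1 := (Sm.const z).mul (hb.D (ex 1))
      have s2 := (hb.D (ex 0)).add s1
      have s3 := (Sm.const (c : ℂ)).mul s2
      have s4 := hqs.sm.mul ha
      have b1 := ((kb (N + 1)).2 1).mul (hb.D _) (BddSmooth.const z)
      have b2 := ((kb (N + 1)).2 0).add b1 (hb.D _) s1
      have b3 := b2.mul s2 (BddSmooth.const (c : ℂ))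
      have b4 := ((ka N).mul ha hqs).mul s4 (BddSmooth.const σ)
      exact b3.add b4 s3 ((Sm.const σ).mul s4)
    refine ih (h₁.D et) (h₂.D et) hs' (fun N => ?_) (fun N => ?_)
    · refine (hcomb Complex.I a₁ a₂ 1 h₁ h₂ hB₁ hB₂ N).congr fun p hp => ?_
      rw [hs.eq₁ p hp]
      ring
    · refine (hcomb (-Complex.I) a₂ a₁ (-1) h₂ h₁ hB₂ hB₁ N).congr fun p hp => ?_
      rw [hs.eq₂ p hp]
      ring

/-! ### From weighted Sobolev bounds to pointwise bounds -/

lemma sobolev_one {g g' : ℝ → ℂ} (hg : ∀ t, HasDerivAt g (g' t) t) (hg' : Continuous g') :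
    ENNReal.ofReal ‖g 0‖ ≤ ∫⁻ t in Set.Icc (0 : ℝ) 1, ENNReal.ofReal (‖g t‖ + ‖g' t‖) := by
  have hgc : Continuous g := continuous_iff_continuousAt.2 fun t => (hg t).continuousAt
  have h1 : ∀ t ∈ Set.Icc (0 : ℝ) 1, ENNReal.ofReal ‖g 0‖ ≤
      ENNReal.ofReal ‖g t‖ + ∫⁻ s in Set.Icc (0 : ℝ) 1, ENNReal.ofReal ‖g' s‖ := by
    intro t ht
    have hftc : ∫ s in (0 : ℝ)..t, g' s = g t - g 0 :=
      intervalIntegral.integral_eq_sub_of_hasDerivAt (fun s _ => hg s)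
        (hg'.intervalIntegrable _ _)
    rw [intervalIntegral.integral_of_le ht.1] at hftc
    have h2 : ENNReal.ofReal ‖g t - g 0‖ ≤
        ∫⁻ s in Set.Icc (0 : ℝ) 1, ENNReal.ofReal ‖g' s‖ := by
      rw [← hftc, ofReal_norm]
      refine (enorm_integral_le_lintegral_enorm _).trans ?_
      simp only [ofReal_norm]
      exact lintegral_mono_set fun s hs => ⟨hs.1.le, hs.2.trans ht.2⟩
    have h3 : ‖g 0‖ ≤ ‖g t‖ + ‖g t - g 0‖ := by
      have := norm_sub_le (g t) (g t - g 0)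
      simpa using this
    calc ENNReal.ofReal ‖g 0‖ ≤ ENNReal.ofReal (‖g t‖ + ‖g t - g 0‖) :=
          ENNReal.ofReal_le_ofReal h3
      _ = ENNReal.ofReal ‖g t‖ + ENNReal.ofReal ‖g t - g 0‖ :=
          ENNReal.ofReal_add (norm_nonneg _) (norm_nonneg _)
      _ ≤ _ := add_le_add le_rfl h2
  have hvol : volume (Set.Icc (0 : ℝ) 1) = 1 := by simp
  have hm : Measurable fun t => ENNReal.ofReal ‖g t‖ :=
    ENNReal.measurable_ofReal.comp hgc.norm.measurable
  calc ENNReal.ofReal ‖g 0‖ = ∫⁻ t in Set.Icc (0 : ℝ) 1, ENNReal.ofReal ‖g 0‖ := by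
        rw [setLIntegral_const, hvol, mul_one]
    _ ≤ ∫⁻ t in Set.Icc (0 : ℝ) 1, (ENNReal.ofReal ‖g t‖ +
          ∫⁻ s in Set.Icc (0 : ℝ) 1, ENNReal.ofReal ‖g' s‖) :=
        setLIntegral_mono' measurableSet_Icc h1
    _ = (∫⁻ t in Set.Icc (0 : ℝ) 1, ENNReal.ofReal ‖g t‖) +
          ∫⁻ s in Set.Icc (0 : ℝ) 1, ENNReal.ofReal ‖g' s‖ := by
        rw [lintegral_add_left hm, setLIntegral_const, hvol, mul_one]
    _ = _ := by
        rw [← lintegral_add_left hm]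
        refine lintegral_congr fun t => ?_
        rw [ENNReal.ofReal_add (norm_nonneg _) (norm_nonneg _)]

lemma hasDerivAt_line {f : Vec × ℝ → ℂ} (hf : Sm f) {T : ℝ} (hT : 0 ≤ T) (X : Vec) (i : Fin 2)
    (t : ℝ) : HasDerivAt (fun t : ℝ => f (X + t • (Pi.single i 1 : Vec), T))
      (D (ex i) f (X + t • (Pi.single i 1 : Vec), T)) t := by
  have h1 : HasDerivAt (fun t : ℝ => X + t • (Pi.single i 1 : Vec)) (Pi.single i 1 : Vec) t := by
    simpa using ((hasDerivAt_id t).smul_const (Pi.single i 1 : Vec)).const_add X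
  have h2 := (hasFDerivAt_slice hf hT (X := X + t • (Pi.single i 1 : Vec))).comp_hasDerivAt t h1
  refine h2.congr_deriv ?_
  simp [D, ex]

/-- The sum of the norms of `f`, `∂₁f`, `∂₀f`, `∂₁∂₀f`. -/
def sumN (f : Vec × ℝ → ℂ) (p : Vec × ℝ) : ℝ :=
  (‖f p‖ + ‖D (ex 1) f p‖) + (‖D (ex 0) f p‖ + ‖D (ex 1) (D (ex 0) f) p‖)

/-- A Sobolev inequality on the unit square with corner `X`. -/
lemma sobolev_two {f : Vec × ℝ → ℂ} (hf : Sm f) {T : ℝ} (hT : 0 ≤ T) (X : Vec) :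
    ENNReal.ofReal ‖f (X, T)‖ ≤ ∫⁻ s in Set.Icc (0 : ℝ) 1, ∫⁻ t in Set.Icc (0 : ℝ) 1,
      ENNReal.ofReal (sumN f
        (X + s • (Pi.single 0 1 : Vec) + t • (Pi.single 1 1 : Vec), T)) := by
  have hline : ∀ {k : Vec × ℝ → ℂ}, Sm k → ∀ (Y : Vec) (i : Fin 2), Continuous fun t : ℝ =>
      k (Y + t • (Pi.single i 1 : Vec), T) := fun hk Y i =>
    (hk.continuous_slice hT).comp (by fun_prop)
  have h0 := sobolev_one (hasDerivAt_line hf hT X 0) (hline (hf.D _) X 0)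
  simp only [zero_smul, add_zero] at h0
  refine h0.trans (lintegral_mono fun s => ?_)
  set Y := X + s • (Pi.single 0 1 : Vec)
  have h1 := sobolev_one (hasDerivAt_line hf hT Y 1) (hline (hf.D _) Y 1)
  have h2 := sobolev_one (hasDerivAt_line (hf.D (ex 0)) hT Y 1) (hline ((hf.D _).D _) Y 1)
  simp only [zero_smul, add_zero] at h1 h2
  rw [ENNReal.ofReal_add (norm_nonneg _) (norm_nonneg _)]
  refine (add_le_add h1 h2).trans ?_
  have hmeas : Measurable fun t : ℝ => ENNReal.ofReal (‖f (Y + t • (Pi.single 1 1 : Vec), T)‖ +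
      ‖D (ex 1) f (Y + t • (Pi.single 1 1 : Vec), T)‖) := ENNReal.measurable_ofReal.comp
    ((hline hf Y 1).norm.add (hline (hf.D _) Y 1).norm).measurable
  rw [← lintegral_add_left hmeas]
  refine lintegral_mono fun t => ?_
  simp only
  rw [← ENNReal.ofReal_add (by positivity) (by positivity)]
  exact le_rfl

lemma lintegral_plane {Φ : Vec → ENNReal} (hΦ : Measurable Φ) (X : Vec) :
    ∫⁻ s : ℝ, ∫⁻ t : ℝ, Φ (X + s • (Pi.single 0 1 : Vec) + t • (Pi.single 1 1 : Vec)) =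
      ∫⁻ Y : Vec, Φ Y := by
  rw [← lintegral_add_left_eq_self (μ := (volume : Measure Vec)) Φ X]
  have hmp := (volume_preserving_finTwoArrow ℝ).symm
  have hΦX : Measurable fun Y => Φ (X + Y) := hΦ.comp (measurable_const_add X)
  have hm : Measurable fun z : ℝ × ℝ => Φ (X + MeasurableEquiv.finTwoArrow.symm z) :=
    hΦX.comp MeasurableEquiv.finTwoArrow.symm.measurable
  rw [← hmp.lintegral_comp hΦX, Measure.volume_eq_prod, lintegral_prod _ hm.aemeasurable]
  refine lintegral_congr fun s => lintegral_congr fun t => ?_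
  congr 1
  funext i
  fin_cases i <;> simp [MeasurableEquiv.finTwoArrow]

lemma wt_shift {X : Vec} {s t : ℝ} (hs : s ∈ Set.Icc (0 : ℝ) 1) (ht : t ∈ Set.Icc (0 : ℝ) 1) :
    wt X ≤ 5 * wt (X + s • (Pi.single 0 1 : Vec) + t • (Pi.single 1 1 : Vec)) := by
  have e : wt (X + s • (Pi.single 0 1 : Vec) + t • (Pi.single 1 1 : Vec)) =
      1 + ((X 0 + s) ^ 2 + (X 1 + t) ^ 2) := by
    simp [wt]
  rw [e]
  unfold wt
  have h1 : s ^ 2 ≤ 1 := by nlinarith [hs.1, hs.2]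
  have h2 : t ^ 2 ≤ 1 := by nlinarith [ht.1, ht.2]
  nlinarith [sq_nonneg (X 0 + 2 * s), sq_nonneg (X 1 + 2 * t)]

/-- Weighted Sobolev bounds of order two give weighted pointwise bounds. -/
lemma sup_bound {ρ : ℝ} {f : Vec × ℝ → ℂ} (hf : Sm f) (hB : SobBd ρ 2 f) (M : ℕ) :
    ∃ C : ℝ, 0 < C ∧ ∀ T ∈ Set.Icc (0 : ℝ) ρ, ∀ X : Vec, wt X ^ M * ‖f (X, T)‖ ≤ C := by
  have hpick : ∀ {k : Vec × ℝ → ℂ}, L2Bd ρ k → ∃ C : ℝ, 0 ≤ C ∧ ∀ T ∈ Set.Icc (0 : ℝ) ρ,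
      ∫⁻ X : Vec, ENNReal.ofReal (wt X ^ (2 * M) * ‖k (X, T)‖ ^ 2) ≤ ENNReal.ofReal C := by
    intro k hk
    obtain ⟨C, hC⟩ := hk (2 * M)
    exact ⟨max C 0, le_max_right _ _, fun T hT =>
      (hC T hT).trans (ENNReal.ofReal_le_ofReal (le_max_left _ _))⟩
  obtain ⟨C₁, p₁, hC₁⟩ := hpick hB.1
  obtain ⟨C₂, p₂, hC₂⟩ := hpick (hB.2 1).l2Bd
  obtain ⟨C₃, p₃, hC₃⟩ := hpick (hB.2 0).l2Bd
  obtain ⟨C₄, p₄, hC₄⟩ := hpick ((hB.2 0).2 1).l2Bd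
  refine ⟨5 ^ M * (4 + (C₁ + C₂ + (C₃ + C₄))), by positivity, fun T hT X => ?_⟩
  let q : (Vec × ℝ → ℂ) → Vec → ℝ := fun k Y => wt Y ^ (2 * M) * ‖k (Y, T)‖ ^ 2
  have q0 : ∀ k Y, 0 ≤ q k Y := fun k Y => by have := wt_pos Y; simp only [q]; positivity
  have qc : ∀ {k}, Sm k → Continuous (q k) := fun hk =>
    (continuous_wt.pow _).mul ((hk.continuous_slice hT.1).norm.pow 2)
  have qm : ∀ {k}, Sm k → Measurable fun Y => ENNReal.ofReal (q k Y) := fun hk =>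
    ENNReal.measurable_ofReal.comp (qc hk).measurable
  let Φ : Vec → ENNReal := fun Y => (ENNReal.ofReal (q f Y) + ENNReal.ofReal (q (D (ex 1) f) Y)) +
    (ENNReal.ofReal (q (D (ex 0) f) Y) + ENNReal.ofReal (q (D (ex 1) (D (ex 0) f)) Y))
  have hΦm : Measurable Φ := ((qm hf).add (qm (hf.D _))).add ((qm (hf.D _)).add (qm ((hf.D _).D _)))
  have hΦ : ∫⁻ Y, Φ Y ≤ ENNReal.ofReal (C₁ + C₂ + (C₃ + C₄)) := by
    have hm : Measurable fun Y => ENNReal.ofReal (q f Y) + ENNReal.ofReal (q (D (ex 1) f) Y) :=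
      (qm hf).add (qm (hf.D _))
    simp only [Φ]
    rw [lintegral_add_left hm, lintegral_add_left (qm hf),
      lintegral_add_left (qm (hf.D _)), ENNReal.ofReal_add (by positivity) (by positivity),
      ENNReal.ofReal_add p₁ p₂, ENNReal.ofReal_add p₃ p₄]
    exact add_le_add (add_le_add (hC₁ T hT) (hC₂ T hT)) (add_le_add (hC₃ T hT) (hC₄ T hT))
  -- `r ≤ 1 + r²` replaces the Cauchy–Schwarz inequality on the unit square
  have hpt : ∀ Y, ENNReal.ofReal (wt Y ^ M * sumN f (Y, T)) ≤ 4 + Φ Y := by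
    intro Y
    have hk : ∀ k : Vec × ℝ → ℂ, wt Y ^ M * ‖k (Y, T)‖ ≤ 1 + q k Y := by
      intro k
      have : q k Y = (wt Y ^ M * ‖k (Y, T)‖) ^ 2 := by simp only [q]; ring
      rw [this]
      nlinarith [sq_nonneg (wt Y ^ M * ‖k (Y, T)‖ - 1), sq_nonneg (wt Y ^ M * ‖k (Y, T)‖)]
    have hle : wt Y ^ M * sumN f (Y, T) ≤ 4 + ((q f Y + q (D (ex 1) f) Y) +
        (q (D (ex 0) f) Y + q (D (ex 1) (D (ex 0) f)) Y)) := by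
      unfold sumN
      nlinarith [hk f, hk (D (ex 1) f), hk (D (ex 0) f), hk (D (ex 1) (D (ex 0) f))]
    refine (ENNReal.ofReal_le_ofReal hle).trans ?_
    have a1 := q0 f Y
    have a2 := q0 (D (ex 1) f) Y
    have a3 := q0 (D (ex 0) f) Y
    have a4 := q0 (D (ex 1) (D (ex 0) f)) Y
    rw [ENNReal.ofReal_add (by positivity) (by positivity),
      ENNReal.ofReal_add (by positivity) (by positivity), ENNReal.ofReal_add a1 a2,
      ENNReal.ofReal_add a3 a4]
    simp [Φ]
  have hvol : volume (Set.Icc (0 : ℝ) 1) = 1 := by simp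
  have hw := wt_pos X
  have hfin : ENNReal.ofReal (wt X ^ M * ‖f (X, T)‖) ≤
      ENNReal.ofReal (5 ^ M * (4 + (C₁ + C₂ + (C₃ + C₄)))) := by
    rw [ENNReal.ofReal_mul (by positivity), ENNReal.ofReal_mul (by positivity)]
    calc ENNReal.ofReal (wt X ^ M) * ENNReal.ofReal ‖f (X, T)‖
        ≤ ENNReal.ofReal (wt X ^ M) * ∫⁻ s in Set.Icc (0 : ℝ) 1, ∫⁻ t in Set.Icc (0 : ℝ) 1,
          ENNReal.ofReal (sumN f
            (X + s • (Pi.single 0 1 : Vec) + t • (Pi.single 1 1 : Vec), T)) := by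
          gcongr
          exact sobolev_two hf hT.1 X
      _ = ∫⁻ s in Set.Icc (0 : ℝ) 1, ∫⁻ t in Set.Icc (0 : ℝ) 1, ENNReal.ofReal (wt X ^ M) *
          ENNReal.ofReal (sumN f
            (X + s • (Pi.single 0 1 : Vec) + t • (Pi.single 1 1 : Vec), T)) := by
          rw [← lintegral_const_mul' _ _ ENNReal.ofReal_ne_top]
          refine lintegral_congr fun s => ?_
          rw [← lintegral_const_mul' _ _ ENNReal.ofReal_ne_top]
      _ ≤ ∫⁻ s in Set.Icc (0 : ℝ) 1, ∫⁻ t in Set.Icc (0 : ℝ) 1, ENNReal.ofReal (5 ^ M) *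
          (4 + Φ (X + s • (Pi.single 0 1 : Vec) + t • (Pi.single 1 1 : Vec))) := by
          refine setLIntegral_mono' measurableSet_Icc fun s hs => ?_
          refine setLIntegral_mono' measurableSet_Icc fun t ht => ?_
          refine le_trans ?_ (mul_le_mul_right (hpt _) _)
          have hY := wt_pos (X + s • (Pi.single 0 1 : Vec) + t • (Pi.single 1 1 : Vec))
          rw [← ENNReal.ofReal_mul (by positivity), ← ENNReal.ofReal_mul (by positivity)]
          refine ENNReal.ofReal_le_ofReal ?_
          rw [← mul_assoc, ← mul_pow]
          have hsn : ∀ p, 0 ≤ sumN f p := fun p => by unfold sumN; positivity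
          exact mul_le_mul_of_nonneg_right (pow_le_pow_left₀ hw.le (wt_shift hs ht) M) (hsn _)
      _ = ENNReal.ofReal (5 ^ M) * (4 + ∫⁻ s in Set.Icc (0 : ℝ) 1, ∫⁻ t in Set.Icc (0 : ℝ) 1,
          Φ (X + s • (Pi.single 0 1 : Vec) + t • (Pi.single 1 1 : Vec))) := by
          have hin : ∀ s : ℝ, ∫⁻ t in Set.Icc (0 : ℝ) 1, ENNReal.ofReal (5 ^ M) *
              (4 + Φ (X + s • (Pi.single 0 1 : Vec) + t • (Pi.single 1 1 : Vec))) =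
              ENNReal.ofReal (5 ^ M) * (4 + ∫⁻ t in Set.Icc (0 : ℝ) 1,
                Φ (X + s • (Pi.single 0 1 : Vec) + t • (Pi.single 1 1 : Vec))) := by
            intro s
            rw [lintegral_const_mul' _ _ ENNReal.ofReal_ne_top,
              lintegral_add_left measurable_const, setLIntegral_const, hvol, mul_one]
          simp only [hin]
          rw [lintegral_const_mul' _ _ ENNReal.ofReal_ne_top,
              lintegral_add_left measurable_const, setLIntegral_const, hvol, mul_one]
      _ ≤ ENNReal.ofReal (5 ^ M) * (4 + ∫⁻ Y, Φ Y) := by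
          gcongr
          rw [← lintegral_plane hΦm X]
          exact (setLIntegral_le_lintegral _ _).trans
            (lintegral_mono fun s => setLIntegral_le_lintegral _ _)
      _ ≤ _ := by
          rw [ENNReal.ofReal_add (by positivity) (by positivity)]
          gcongr
          simp
  exact (ENNReal.ofReal_le_ofReal_iff (by positivity)).1 hfin

/-! ### The Dirac system -/

/-- The Dirac system in the form `Sys`.  At `T = 0` the equation for the one-sided time derivative
follows from the equation at positive times by continuity. -/
lemma DiracSystem.sys {ED vF ϑ : ℝ} {κ : Vec → ℝ} {α₁ α₂ : Vec → ℝ → ℂ}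
    (h : DiracSystem ED vF ϑ κ α₁ α₂)
    (h₁ : Sm fun p => α₁ p.1 p.2) (h₂ : Sm fun p => α₂ p.1 p.2)
    (hq : BddSmooth fun X => Complex.I * ((ϑ / (2 * Real.sqrt ED) : ℝ) : ℂ) * (κ X : ℂ)) :
    Sys (vF / (2 * Real.sqrt ED))
      (fun X => Complex.I * ((ϑ / (2 * Real.sqrt ED) : ℝ) : ℂ) * (κ X : ℂ))
      (fun p => α₁ p.1 p.2) (fun p => α₂ p.1 p.2) (fun _ => 0) (fun _ => 0) := by
  have hm : ∀ X, (((ϑ * κ X) / (2 * Real.sqrt ED) : ℝ) : ℂ) =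
      ((ϑ / (2 * Real.sqrt ED) : ℝ) : ℂ) * (κ X : ℂ) := fun X => by
    rw [← Complex.ofReal_mul, mul_div_right_comm]
  have hcont : ∀ {f : Vec × ℝ → ℂ}, Sm f → ContinuousOn f HS := fun hf => ContDiffOn.continuousOn hf
  have I2 := Complex.I_mul_I
  constructor
  · refine Set.EqOn.of_subset_closure (s := interior HS) ?_ (hcont (h₁.D et)) ?_
      interior_subset HS_subset_closure
    · rintro ⟨X, T⟩ hp
      have hT : 0 < T := by simpa [interior_HS] using hp
      have e := (h X T hT.le).1
      have e1 : deriv (α₁ X) T = D et (fun p => α₁ p.1 p.2) (X, T) :=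
        (hasDerivAt_time h₁ (X := X) hT).deriv
      have e2 := pd_slice h₂ 0 (X := X) hT.le
      have e3 := pd_slice h₂ 1 (X := X) hT.le
      simp only at e2 e3
      rw [e1, e2, e3, hm] at e
      simp only
      linear_combination (-Complex.I) * e + (D et (fun p => α₁ p.1 p.2) (X, T)
        - ((vF / (2 * Real.sqrt ED) : ℝ) : ℂ) * D (ex 0) (fun p => α₂ p.1 p.2) (X, T)) * I2
    · exact hcont ((((Sm.const _).mul ((h₂.D _).add ((Sm.const _).mul (h₂.D _)))).add
        (hq.sm.mul h₁)).add (Sm.const 0))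
  · refine Set.EqOn.of_subset_closure (s := interior HS) ?_ (hcont (h₂.D et)) ?_
      interior_subset HS_subset_closure
    · rintro ⟨X, T⟩ hp
      have hT : 0 < T := by simpa [interior_HS] using hp
      have e := (h X T hT.le).2
      have e1 : deriv (α₂ X) T = D et (fun p => α₂ p.1 p.2) (X, T) :=
        (hasDerivAt_time h₂ (X := X) hT).deriv
      have e2 := pd_slice h₁ 0 (X := X) hT.le
      have e3 := pd_slice h₁ 1 (X := X) hT.le
      simp only at e2 e3
      rw [e1, e2, e3, hm] at e
      simp only
      linear_combination (-Complex.I) * e + (D et (fun p => α₂ p.1 p.2) (X, T)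
        - ((vF / (2 * Real.sqrt ED) : ℝ) : ℂ) * D (ex 0) (fun p => α₁ p.1 p.2) (X, T)) * I2
    · exact (((continuousOn_const.mul ((hcont (h₁.D _)).sub
        (continuousOn_const.mul (hcont (h₁.D _))))).sub
        ((hcont hq.sm).mul (hcont h₂))).add continuousOn_const)

/-- Weighted sup bounds for the derivatives in the theorem, which agree with derivatives within
the half-space except for junk values `0` on the boundary `T = 0`. -/
lemma final_bound {α : Vec → ℝ → ℂ} (hα : Sm fun p => α p.1 p.2) {ρ : ℝ} {l : ℕ}
    (hB : ∀ N, SobBd ρ N ((D et)^[l] fun p => α p.1 p.2)) (M n₁ n₂ : ℕ) :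
    ∃ C : ℝ, 0 < C ∧ ∀ T ∈ Set.Icc (0 : ℝ) ρ, ∀ X : Vec,
      (1 + (X 0 ^ 2 + X 1 ^ 2)) ^ ((M : ℝ) / 2) *
        ‖pdMulti n₁ n₂ (fun Y => iteratedDeriv l (α Y) T) X‖ ≤ C := by
  have s0 := hα.iterate_D et l
  have s1 := s0.iterate_D (ex 1) n₂
  have s2 := s1.iterate_D (ex 0) n₁
  have b1 := SobBd.iterate_D hB 1 n₂
  have b2 := SobBd.iterate_D b1 0 n₁
  obtain ⟨C, hC0, hC⟩ := sup_bound s2 (b2 2) M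
  refine ⟨C, hC0, fun T hT X => ?_⟩
  have hw : (1 + (X 0 ^ 2 + X 1 ^ 2)) ^ ((M : ℝ) / 2) ≤ wt X ^ M := by
    rw [← Real.rpow_natCast (wt X) M]
    refine Real.rpow_le_rpow_of_exponent_le (one_le_wt X) ?_
    have : (0 : ℝ) ≤ M := M.cast_nonneg
    linarith
  have halt := iterate_pd_alternative s1 hT.1 (iterate_pd_alternative s0 hT.1
    (fun Y => iteratedDeriv_alternative hα l Y hT.1) 1 n₂) 0 n₁ X
  unfold pdMulti
  rcases halt with h | h
  · rw [h, norm_zero, mul_zero]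
    exact hC0.le
  · rw [h]
    exact (mul_le_mul_of_nonneg_right hw (norm_nonneg _)).trans (hC T hT X)

/-- Any smooth solution of the Dirac system with varying mass,
with Schwartz initial data, which is Schwartz in X for every fixed T ≥ 0,
has all of its space-time derivatives bounded with arbitrary polynomial weight,
uniformly for T in compact time intervals. -/
theorem stmt7 (ED vF ϑ : ℝ) (hED : 0 < ED) (hvF : 0 < vF) (hϑ : ϑ ≠ 0)
    (κ : Vec → ℝ) (hκ_smooth : ContDiff ℝ (⊤ : ℕ∞) κ)
    (hκ_bdd : ∀ k : ℕ, ∃ C : ℝ, ∀ x : Vec, ‖iteratedFDeriv ℝ k κ x‖ ≤ C)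
    (α₁₀ α₂₀ : SchwartzMap Vec ℂ)
    (α₁ α₂ : Vec → ℝ → ℂ)
    (hsmooth₁ : ContDiffOn ℝ (⊤ : ℕ∞) (fun p : Vec × ℝ => α₁ p.1 p.2) (Set.univ ×ˢ Set.Ici 0))
    (hsmooth₂ : ContDiffOn ℝ (⊤ : ℕ∞) (fun p : Vec × ℝ => α₂ p.1 p.2) (Set.univ ×ˢ Set.Ici 0))
    (hdirac : DiracSystem ED vF ϑ κ α₁ α₂)
    (hinit : ∀ X : Vec, α₁ X 0 = α₁₀ X ∧ α₂ X 0 = α₂₀ X)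
    (hschwartz : ∀ T : ℝ, 0 ≤ T →
      (∃ g : SchwartzMap Vec ℂ, ∀ X, g X = α₁ X T) ∧
      (∃ g : SchwartzMap Vec ℂ, ∀ X, g X = α₂ X T)) :
    ∀ ρ : ℝ, 0 < ρ → ∀ M l n₁ n₂ : ℕ, ∃ C : ℝ, 0 < C ∧
      ∀ T ∈ Set.Icc (0:ℝ) ρ, ∀ X : Vec,
        (1 + (X 0 ^ 2 + X 1 ^ 2)) ^ ((M : ℝ) / 2) *
            ‖pdMulti n₁ n₂ (fun Y => iteratedDeriv l (α₁ Y) T) X‖ ≤ C ∧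
        (1 + (X 0 ^ 2 + X 1 ^ 2)) ^ ((M : ℝ) / 2) *
            ‖pdMulti n₁ n₂ (fun Y => iteratedDeriv l (α₂ Y) T) X‖ ≤ C := by
  have h₁ : Sm fun p => α₁ p.1 p.2 := hsmooth₁
  have h₂ : Sm fun p => α₂ p.1 p.2 := hsmooth₂
  have hq := BddSmooth.of_real hκ_smooth hκ_bdd
    (Complex.I * ((ϑ / (2 * Real.sqrt ED) : ℝ) : ℂ))
  have hs := hdirac.sys h₁ h₂ hq
  have hc : 0 ≤ vF / (2 * Real.sqrt ED) := by positivity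
  intro ρ hρ M l n₁ n₂
  have hB : ∀ N, SobBd ρ N (fun p => α₁ p.1 p.2) ∧ SobBd ρ N (fun p => α₂ p.1 p.2) := fun N =>
    sobolev_estimate hc hq (by simp [-Complex.ofReal_div]) N h₁ h₂ (Sm.const 0) (Sm.const 0) hs
      (SobBd.zero ρ N) (SobBd.zero ρ N)
      (SobBd.of_schwartz h₁ α₁₀ (fun X => (hinit X).1.symm) N)
      (SobBd.of_schwartz h₂ α₂₀ (fun X => (hinit X).2.symm) N)
  obtain ⟨t₁, t₂⟩ := time_derivatives hq h₁ h₂ hs (fun N => (hB N).1) (fun N => (hB N).2) l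
  obtain ⟨C₁, hC₁, b₁⟩ := final_bound h₁ t₁ M n₁ n₂
  obtain ⟨C₂, hC₂, b₂⟩ := final_bound h₂ t₂ M n₁ n₂
  exact ⟨C₁ + C₂, by positivity, fun T hT X =>
    ⟨(b₁ T hT X).trans (by linarith), (b₂ T hT X).trans (by linarith)⟩⟩
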